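/- arXiv:2206.02185 — 5 statements merged into one kernel-verified Lean document; each statement's English description precedes it below -/
import Mathlib

section
/- Let R and S be two squares in the plane (arbitrary orientations and sizes) that are crossing, meaning R ∩ S is nonempty but contains none of the eight vertices of R and S. Then the centre of R lies in S and the centre of S lies in R. -/
open Classical MeasureTheory
noncomputable section

/-- Points of the Euclidean plane. -/
abbrev Pt := EuclideanSpace ℝ (Fin 2)

/-- A finite point set `H` hits every member of the family `F`. -/
def Hits (H : Finset Pt) (F : Finset (Set Pt)) : Prop := ∀ S ∈ F, ∃ p ∈ H, p ∈ S

/-- The hitting number τ of a family. -/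
def hitNum (F : Finset (Set Pt)) : ℕ := sInf {n | ∃ H : Finset Pt, H.card = n ∧ Hits H F}

/-- The packing number ν of a family. -/
def packNum (F : Finset (Set Pt)) : ℕ :=
  sSup {n | ∃ P ⊆ F, P.card = n ∧ (P : Set (Set Pt)).Pairwise Disjoint}

/-- The maximum degree Δ of a family: the maximum number of members containing a common point. -/
def maxDeg (F : Finset (Set Pt)) : ℕ :=
  sSup {n | ∃ p : Pt, (F.filter fun S => p ∈ S).card = n}

/-- The chromatic number χ of the intersection graph of a family. -/
def chromNum (F : Finset (Set Pt)) : ℕ :=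
  sInf {n | ∃ col : Set Pt → ℕ, (∀ S ∈ F, col S < n) ∧
    ∀ S ∈ F, ∀ T ∈ F, S ≠ T → (S ∩ T).Nonempty → col S ≠ col T}

/-- Hitting-`t`-degeneracy: every nonempty subfamily has a member whose closed
neighbourhood within the subfamily can be hit by at most `t` points. -/
def HitDeg (t : ℕ) (F : Finset (Set Pt)) : Prop :=
  ∀ F' ⊆ F, F'.Nonempty → ∃ S ∈ F',
    hitNum (F'.filter fun T => (T ∩ S).Nonempty) ≤ t

/-- `D`-degeneracy of a family: every nonempty subfamily has a member intersecting
at most `D` other members of the subfamily. -/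
def FamDeg (D : ℕ) (F : Finset (Set Pt)) : Prop :=
  ∀ F' ⊆ F, F'.Nonempty → ∃ S ∈ F',
    (F'.filter fun T => T ≠ S ∧ (T ∩ S).Nonempty).card ≤ D

/-- First coordinate of `x - c` in the rotated (by `θ`) orthonormal frame. -/
def sqForm1 (c : Pt) (θ : ℝ) (x : Pt) : ℝ :=
  Real.cos θ * (x 0 - c 0) + Real.sin θ * (x 1 - c 1)

/-- Second coordinate of `x - c` in the rotated (by `θ`) orthonormal frame. -/
def sqForm2 (c : Pt) (θ : ℝ) (x : Pt) : ℝ :=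
  Real.sin θ * (x 0 - c 0) - Real.cos θ * (x 1 - c 1)

/-- The (closed, possibly rotated) square with centre `c`, rotation angle `θ` and side `s`. -/
def sqSet (c : Pt) (θ s : ℝ) : Set Pt :=
  {x | |sqForm1 c θ x| ≤ s / 2 ∧ |sqForm2 c θ x| ≤ s / 2}

/-- The four vertices of the square with centre `c`, angle `θ` and side `s`. -/
def sqVertices (c : Pt) (θ s : ℝ) : Set Pt :=
  {x | |sqForm1 c θ x| = s / 2 ∧ |sqForm2 c θ x| = s / 2}

/-- A set is a (possibly rotated) unit square. -/
def IsUnitSquare (S : Set Pt) : Prop := ∃ c θ, S = sqSet c θ 1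

/-- A set is a (possibly rotated) square of some positive side length. -/
def IsSquareSet (S : Set Pt) : Prop := ∃ c θ s, 0 < s ∧ S = sqSet c θ s

/-- The square with centre `(c, d)`, half side `a` and axis direction `(p, q)`, in coordinates. -/
def coordSquare (a p q c d : ℝ) : Set (ℝ × ℝ) :=
  {z | |p * (z.1 - c) + q * (z.2 - d)| ≤ a ∧ |q * (z.1 - c) - p * (z.2 - d)| ≤ a}

/-- No vertex of `[-b, b]²` lies in the square `coordSquare a p q c d`, and conversely. -/
structure VertexFree (a b p q c d : ℝ) : Prop where
  outer : ∀ x y, |x| = b → |y| = b → (x, y) ∉ coordSquare a p q c d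
  inner : ∀ x y, |x| ≤ b → |y| ≤ b → |p * (x - c) + q * (y - d)| = a →
    |q * (x - c) - p * (y - d)| ≠ a

lemma mem_coordSquare_rotate {a p q c d x y : ℝ} :
    (x, y) ∈ coordSquare a q (-p) c d ↔ (x, y) ∈ coordSquare a p q c d := by
  have h : -p * (x - c) - q * (y - d) = -(p * (x - c) + q * (y - d)) := by ring
  simp only [coordSquare, Set.mem_ofPred_eq, neg_mul, ← sub_eq_add_neg]
  rw [← neg_mul, h, abs_neg, and_comm]

lemma mem_coordSquare_reflect {a p q c d x y : ℝ} :
    (x, -y) ∈ coordSquare a p (-q) c (-d) ↔ (x, y) ∈ coordSquare a p q c d := by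
  have h₁ : p * (x - c) + -q * (-y - -d) = p * (x - c) + q * (y - d) := by ring
  have h₂ : -q * (x - c) - p * (-y - -d) = -(q * (x - c) - p * (y - d)) := by ring
  simp only [coordSquare, Set.mem_ofPred_eq, h₁, h₂, abs_neg]

lemma mem_coordSquare_swap {a p q c d x y : ℝ} :
    (y, x) ∈ coordSquare a q p d c ↔ (x, y) ∈ coordSquare a p q c d := by
  have h₁ : q * (y - d) + p * (x - c) = p * (x - c) + q * (y - d) := by ring
  have h₂ : p * (y - d) - q * (x - c) = -(q * (x - c) - p * (y - d)) := by ring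
  simp only [coordSquare, Set.mem_ofPred_eq, h₁, h₂, abs_neg]

namespace VertexFree

variable {a b p q c d : ℝ}

lemma rotate (h : VertexFree a b p q c d) : VertexFree a b q (-p) c d where
  outer x y hx hy hz := h.outer x y hx hy (mem_coordSquare_rotate.1 hz)
  inner x y hx hy h₁ h₂ := by
    refine h.inner x y hx hy ?_ ?_
    · rw [← h₂, ← abs_neg]; ring_nf
    · rw [← h₁]; ring_nf

lemma reflect (h : VertexFree a b p q c d) : VertexFree a b p (-q) c (-d) where
  outer x y hx hy hz := by
    refine h.outer x (-y) hx (by rwa [abs_neg]) ?_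
    rw [← mem_coordSquare_reflect, neg_neg]
    exact hz
  inner x y hx hy h₁ h₂ := by
    refine h.inner x (-y) hx (by rwa [abs_neg]) ?_ ?_
    · rw [← h₁]; ring_nf
    · rw [← h₂, ← abs_neg]; ring_nf

lemma swap (h : VertexFree a b p q c d) : VertexFree a b q p d c where
  outer x y hx hy hz := h.outer y x hy hx (mem_coordSquare_swap.1 hz)
  inner x y hx hy h₁ h₂ := by
    refine h.inner y x hy hx ?_ ?_
    · rw [← h₁]; ring_nf
    · rw [← h₂, ← abs_neg]; ring_nf

end VertexFree

lemma coordSquare_segment {a p q c d x y x' y' t : ℝ} (h : (x, y) ∈ coordSquare a p q c d)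
    (h' : (x', y') ∈ coordSquare a p q c d) (ht₀ : 0 ≤ t) (ht₁ : t ≤ 1) :
    (x + t * (x' - x), y + t * (y' - y)) ∈ coordSquare a p q c d := by
  simp only [coordSquare, Set.mem_ofPred_eq, abs_le] at *
  obtain ⟨⟨h₁, h₂⟩, h₃, h₄⟩ := h
  obtain ⟨⟨k₁, k₂⟩, k₃, k₄⟩ := h'
  have ht : 0 ≤ 1 - t := by linarith
  refine ⟨⟨?_, ?_⟩, ?_, ?_⟩
  · linear_combination (1 - t) * h₁ + t * k₁
  · linear_combination (1 - t) * h₂ + t * k₂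
  · linear_combination (1 - t) * h₃ + t * k₃
  · linear_combination (1 - t) * h₄ + t * k₄

/-- A segment in the square whose ends have second coordinates on either side of `m` contains a
point with second coordinate `m`. -/
lemma exists_mem_coordSquare_snd {a p q c d x y x' y' m : ℝ}
    (h : (x, y) ∈ coordSquare a p q c d) (h' : (x', y') ∈ coordSquare a p q c d)
    (hm : y ≤ m) (hm' : m < y') :
    ∃ t, 0 ≤ t ∧ t ≤ 1 ∧ y + t * (y' - y) = m ∧
      (x + t * (x' - x), m) ∈ coordSquare a p q c d := by
  have hpos : 0 < y' - y := by linarith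
  have ht : y + (m - y) / (y' - y) * (y' - y) = m := by
    rw [div_mul_cancel₀ _ hpos.ne']; ring
  have ht₀ : 0 ≤ (m - y) / (y' - y) := div_nonneg (by linarith) hpos.le
  have ht₁ : (m - y) / (y' - y) ≤ 1 := (div_le_one hpos).2 (by linarith)
  refine ⟨_, ht₀, ht₁, ht, ?_⟩
  have := coordSquare_segment h h' ht₀ ht₁
  rwa [ht] at this

/-- On the line of the edge `x = b`, all points of a vertex-free square stay
below the height `b` once one of them does. -/
lemma VertexFree.le_of_mem_edge {a b p q c d y y' : ℝ} (h : VertexFree a b p q c d) (hb : 0 ≤ b)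
    (hy : (b, y) ∈ coordSquare a p q c d) (hyb : y ≤ b)
    (hy' : (b, y') ∈ coordSquare a p q c d) : y' ≤ b := by
  by_contra! hlt
  obtain ⟨t, -, -, -, ht⟩ := exists_mem_coordSquare_snd hy hy' hyb hlt
  rw [sub_self, mul_zero, add_zero] at ht
  exact h.outer b b (abs_of_nonneg hb) (abs_of_nonneg hb) ht

lemma VertexFree.abs_le_of_mem_edge {a b p q c d y y' : ℝ} (h : VertexFree a b p q c d)
    (hb : 0 ≤ b) (hy : (b, y) ∈ coordSquare a p q c d) (hyb : |y| ≤ b)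
    (hy' : (b, y') ∈ coordSquare a p q c d) : |y'| ≤ b := by
  rw [abs_le] at hyb ⊢
  have := h.reflect.le_of_mem_edge hb (mem_coordSquare_reflect.2 hy) (by linarith)
    (mem_coordSquare_reflect.2 hy')
  exact ⟨by linarith, h.le_of_mem_edge hb hy hyb.2 hy'⟩

/-- The vertex of the tilted square furthest to the left, its projection to the edge line `x = b`
and a second point of the square on that line would all be within the axis-parallel square. -/
lemma VertexFree.center_le_of_mem_edge_of_le {a b p q c d y : ℝ} (h : VertexFree a b p q c d)
    (hb : 0 ≤ b) (ha : 0 ≤ a) (hpq : p ^ 2 + q ^ 2 = 1) (hq : 0 ≤ q) (hqp : q ≤ p)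
    (hy : (b, y) ∈ coordSquare a p q c d) (hyb : |y| ≤ b) : c ≤ b := by
  by_contra! hc
  have hp : 0 ≤ p := hq.trans hqp
  obtain ⟨t, ht⟩ : ∃ t, t = b - (c - a * (p + q)) := ⟨_, rfl⟩
  obtain ⟨v, hv⟩ : ∃ v, v = d + a * (p - q) := ⟨_, rfl⟩
  have ht₀ : 0 ≤ t := by
    have h₁ := (abs_le.1 hy.1).1
    have h₂ := (abs_le.1 hy.2).1
    simp only at h₁ h₂
    have e : t = p * (p * (b - c) + q * (y - d) + a) + q * (q * (b - c) - p * (y - d) + a) := by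
      linear_combination ht - (b - c) * hpq
    rw [e]
    exact add_nonneg (mul_nonneg hp (by linarith)) (mul_nonneg hq (by linarith))
  have ht₁ : t ≤ a * (p + q) := by linarith
  have hsum : t * (p + q) ≤ 2 * a := by
    have h₁ := mul_le_mul_of_nonneg_right ht₁ (add_nonneg hp hq)
    have h₂ : 0 ≤ a * (p - q) ^ 2 := by positivity
    linear_combination h₁ + h₂ + 2 * a * hpq
  have htp : 0 ≤ t * p := mul_nonneg ht₀ hp
  have htq : 0 ≤ t * q := mul_nonneg ht₀ hq
  have htpq : 0 ≤ t * (p - q) := mul_nonneg ht₀ (by linarith)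
  have e₁ : ∀ s, p * (b - c) + q * (v + s - d) = -a + t * p + s * q := fun s ↦ by
    linear_combination -p * ht + q * hv - a * hpq
  have e₂ : ∀ s, q * (b - c) - p * (v + s - d) = -a + t * q - s * p := fun s ↦ by
    linear_combination -q * ht - p * hv - a * hpq
  have hfoot : (b, v + 0) ∈ coordSquare a p q c d := by
    simp only [coordSquare, Set.mem_ofPred_eq, e₁, e₂, abs_le]
    refine ⟨⟨?_, ?_⟩, ?_, ?_⟩ <;> linarith
  have hend : (b, v + -t) ∈ coordSquare a p q c d := by
    simp only [coordSquare, Set.mem_ofPred_eq, e₁, e₂, abs_le]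
    refine ⟨⟨?_, ?_⟩, ?_, ?_⟩ <;> linarith
  have hf := h.abs_le_of_mem_edge hb hy hyb hfoot
  have he := h.abs_le_of_mem_edge hb hy hyb hend
  rw [add_zero] at hf
  rw [abs_le] at he
  refine h.inner (b - t) v (abs_le.2 ⟨?_, by linarith⟩) hf ?_ ?_
  · linarith [(abs_le.1 hf).2, he.1]
  · have : p * (b - t - c) + q * (v - d) = -a := by linear_combination e₁ 0
    rw [this, abs_neg, abs_of_nonneg ha]
  · have : q * (b - t - c) - p * (v - d) = -a := by linear_combination e₂ 0
    rw [this, abs_neg, abs_of_nonneg ha]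

lemma VertexFree.center_le_of_mem_edge_of_abs_le {a b p q c d y : ℝ}
    (h : VertexFree a b p q c d) (hb : 0 ≤ b) (ha : 0 ≤ a) (hpq : p ^ 2 + q ^ 2 = 1)
    (hqp : |q| ≤ p) (hy : (b, y) ∈ coordSquare a p q c d) (hyb : |y| ≤ b) : c ≤ b := by
  obtain hq | hq := le_total 0 q
  · exact h.center_le_of_mem_edge_of_le hb ha hpq hq ((le_abs_self q).trans hqp) hy hyb
  · exact h.reflect.center_le_of_mem_edge_of_le hb ha (by rw [neg_sq, hpq]) (by linarith)
      ((neg_le_abs q).trans hqp) (mem_coordSquare_reflect.2 hy) (by rwa [abs_neg])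

/-- A tilted square meeting the edge `x = b` of `[-b, b]²` without containing or contributing
vertices has its centre on the inner side of that edge. -/
lemma VertexFree.center_le_of_mem_edge {a b p q c d y : ℝ}
    (h : VertexFree a b p q c d) (hb : 0 ≤ b) (ha : 0 ≤ a) (hpq : p ^ 2 + q ^ 2 = 1)
    (hy : (b, y) ∈ coordSquare a p q c d) (hyb : |y| ≤ b) : c ≤ b := by
  have hy₁ := mem_coordSquare_rotate.2 hy
  have hy₂ := mem_coordSquare_rotate.2 hy₁
  have hy₃ := mem_coordSquare_rotate.2 hy₂
  obtain hle | hle := le_total |q| |p|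
  · obtain hp | hp := le_total 0 p
    · exact h.center_le_of_mem_edge_of_abs_le hb ha hpq (by rwa [abs_of_nonneg hp] at hle) hy hyb
    · exact h.rotate.rotate.center_le_of_mem_edge_of_abs_le hb ha (by linarith)
        (by rwa [abs_neg, ← abs_of_nonpos hp]) hy₂ hyb
  · obtain hq | hq := le_total 0 q
    · exact h.rotate.center_le_of_mem_edge_of_abs_le hb ha (by linarith)
        (by rwa [abs_neg, ← abs_of_nonneg hq]) hy₁ hyb
    · exact h.rotate.rotate.rotate.center_le_of_mem_edge_of_abs_le hb ha (by linarith)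
        (by rwa [neg_neg, ← abs_of_nonpos hq]) hy₃ hyb

/-- If the segment from a common point to the centre leaves `[-b, b]²` through the line `x = b`
above height `b`, then it first crosses the edge `y = b`. -/
lemma VertexFree.le_of_mem_line {a b p q c d x y y' : ℝ}
    (h : VertexFree a b p q c d) (hb : 0 ≤ b) (ha : 0 ≤ a) (hpq : p ^ 2 + q ^ 2 = 1)
    (hxy : (x, y) ∈ coordSquare a p q c d) (hx : |x| ≤ b) (hy : |y| ≤ b)
    (hy' : (b, y') ∈ coordSquare a p q c d) (hd : b < y' → b < d) : y' ≤ b := by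
  by_contra! hlt
  rw [abs_le] at hx
  obtain ⟨t, ht₀, ht₁, -, ht⟩ := exists_mem_coordSquare_snd hxy hy' (abs_le.1 hy).2 hlt
  refine (hd hlt).not_ge (h.swap.center_le_of_mem_edge hb ha (by linarith)
    (mem_coordSquare_swap.2 ht) (abs_le.2 ⟨?_, ?_⟩))
  · linarith [mul_nonneg ht₀ (sub_nonneg.2 hx.2)]
  · linarith [mul_le_mul_of_nonneg_right ht₁ (sub_nonneg.2 hx.2)]

lemma VertexFree.center_le {a b p q c d x y : ℝ}
    (h : VertexFree a b p q c d) (hb : 0 ≤ b) (ha : 0 ≤ a) (hpq : p ^ 2 + q ^ 2 = 1)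
    (hxy : (x, y) ∈ coordSquare a p q c d) (hx : |x| ≤ b) (hy : |y| ≤ b) : c ≤ b := by
  by_contra! hc
  have hcd : (c, d) ∈ coordSquare a p q c d := by simp [coordSquare, ha]
  obtain ⟨t, ht₀, ht₁, -, ht⟩ := exists_mem_coordSquare_snd (mem_coordSquare_swap.2 hxy)
    (mem_coordSquare_swap.2 hcd) (abs_le.1 hx).2 hc
  have hy' := mem_coordSquare_swap.1 ht
  have hy₁ := (abs_le.1 hy).1
  have hy₂ := (abs_le.1 hy).2
  refine hc.not_ge (h.center_le_of_mem_edge hb ha hpq hy' (abs_le.2 ⟨?_, ?_⟩))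
  · have := h.reflect.le_of_mem_line hb ha (by rw [neg_sq, hpq]) (mem_coordSquare_reflect.2 hxy)
      hx (by rwa [abs_neg]) (mem_coordSquare_reflect.2 hy') fun hlt ↦ by
        by_contra! hd
        nlinarith
    linarith
  · exact h.le_of_mem_line hb ha hpq hxy hx hy hy' fun hlt ↦ by
      by_contra! hd
      nlinarith

lemma VertexFree.abs_center_snd_le {a b p q c d x y : ℝ}
    (h : VertexFree a b p q c d) (hb : 0 ≤ b) (ha : 0 ≤ a) (hpq : p ^ 2 + q ^ 2 = 1)
    (hxy : (x, y) ∈ coordSquare a p q c d) (hx : |x| ≤ b) (hy : |y| ≤ b) : |d| ≤ b := by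
  have h₁ := h.swap.center_le hb ha (by linarith) (mem_coordSquare_swap.2 hxy) hy hx
  have h₂ := h.reflect.swap.center_le hb ha (by linarith)
    (mem_coordSquare_swap.2 (mem_coordSquare_reflect.2 hxy)) (by rwa [abs_neg]) hx
  exact abs_le.2 ⟨by linarith, h₁⟩

/-- The first form of a square, expressed in the frame of another one. -/
lemma sqForm1_eq (cR cS : Pt) (θR θS : ℝ) (x : Pt) :
    sqForm1 cR θR x =
      Real.cos (θR - θS) * (sqForm1 cS θS x - sqForm1 cS θS cR) +
        -Real.sin (θR - θS) * (sqForm2 cS θS x - sqForm2 cS θS cR) := by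
  rw [Real.cos_sub, Real.sin_sub]
  unfold sqForm1 sqForm2
  linear_combination (-Real.cos θR * (x 0 - cR 0) - Real.sin θR * (x 1 - cR 1)) *
    Real.sin_sq_add_cos_sq θS

/-- The second form of a square, expressed in the frame of another one. -/
lemma sqForm2_eq (cR cS : Pt) (θR θS : ℝ) (x : Pt) :
    sqForm2 cR θR x =
      -(-Real.sin (θR - θS) * (sqForm1 cS θS x - sqForm1 cS θS cR) -
        Real.cos (θR - θS) * (sqForm2 cS θS x - sqForm2 cS θS cR)) := by
  rw [Real.cos_sub, Real.sin_sub]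
  unfold sqForm1 sqForm2
  linear_combination (-Real.sin θR * (x 0 - cR 0) + Real.cos θR * (x 1 - cR 1)) *
    Real.sin_sq_add_cos_sq θS

lemma exists_sqForm_eq (c : Pt) (θ x y : ℝ) : ∃ P, sqForm1 c θ P = x ∧ sqForm2 c θ P = y := by
  refine ⟨!₂[c 0 + (Real.cos θ * x + Real.sin θ * y), c 1 + (Real.sin θ * x - Real.cos θ * y)],
    ?_, ?_⟩
  · simp only [sqForm1, Matrix.cons_val_zero, Matrix.cons_val_one]
    linear_combination x * Real.sin_sq_add_cos_sq θ
  · simp only [sqForm2, Matrix.cons_val_zero, Matrix.cons_val_one]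
    linear_combination y * Real.sin_sq_add_cos_sq θ

lemma center_mem_of_crossing (cR cS : Pt) (θR θS sR sS : ℝ) (hR : 0 < sR) (hS : 0 < sS)
    (hne : (sqSet cR θR sR ∩ sqSet cS θS sS).Nonempty)
    (hv : (sqSet cR θR sR ∩ sqSet cS θS sS) ∩
      (sqVertices cR θR sR ∪ sqVertices cS θS sS) = ∅) :
    cR ∈ sqSet cS θS sS := by
  have hmem : ∀ P, P ∈ sqSet cR θR sR ↔ (sqForm1 cS θS P, sqForm2 cS θS P) ∈
      coordSquare (sR / 2) (Real.cos (θR - θS)) (-Real.sin (θR - θS))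
        (sqForm1 cS θS cR) (sqForm2 cS θS cR) := fun P ↦ by
    simp only [sqSet, coordSquare, Set.mem_ofPred_eq]
    rw [sqForm1_eq cR cS θR θS P, sqForm2_eq cR cS θR θS P, abs_neg]
  have hfree : VertexFree (sR / 2) (sS / 2) (Real.cos (θR - θS)) (-Real.sin (θR - θS))
      (sqForm1 cS θS cR) (sqForm2 cS θS cR) := by
    refine ⟨fun x y hx hy hxy ↦ ?_, fun x y hx hy h₁ h₂ ↦ ?_⟩
    · obtain ⟨P, rfl, rfl⟩ := exists_sqForm_eq cS θS x y
      exact hv.subset ⟨⟨(hmem P).2 hxy, hx.le, hy.le⟩, Or.inr ⟨hx, hy⟩⟩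
    · obtain ⟨P, rfl, rfl⟩ := exists_sqForm_eq cS θS x y
      rw [← sqForm1_eq] at h₁
      rw [← abs_neg, ← sqForm2_eq] at h₂
      exact hv.subset ⟨⟨⟨h₁.le, h₂.le⟩, hx, hy⟩, Or.inl ⟨h₁, h₂⟩⟩
  have hpq : Real.cos (θR - θS) ^ 2 + (-Real.sin (θR - θS)) ^ 2 = 1 := by
    rw [neg_sq, Real.cos_sq_add_sin_sq]
  obtain ⟨P, hPR, hPx, hPy⟩ := hne
  have hP := (hmem P).1 hPR
  exact ⟨hfree.swap.abs_center_snd_le (by linarith) (by linarith) (by linarith)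
      (mem_coordSquare_swap.2 hP) hPy hPx,
    hfree.abs_center_snd_le (by linarith) (by linarith) hpq hP hPx hPy⟩

theorem stmt_12 (cR cS : Pt) (θR θS sR sS : ℝ) (hR : 0 < sR) (hS : 0 < sS)
    (hne : (sqSet cR θR sR ∩ sqSet cS θS sS).Nonempty)
    (hv : (sqSet cR θR sR ∩ sqSet cS θS sS) ∩
      (sqVertices cR θR sR ∪ sqVertices cS θS sS) = ∅) :
    cR ∈ sqSet cS θS sS ∧ cS ∈ sqSet cR θR sR :=
  ⟨center_mem_of_crossing cR cS θR θS sR sS hR hS hne hv,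
    center_mem_of_crossing cS cR θS θR sS sR hS hR (by rwa [Set.inter_comm])
      (by rwa [Set.inter_comm (sqSet cS θS sS), Set.union_comm])⟩
end
end

section
/- If C is a finite family of (possibly rotated) unit squares in the plane, then τ(C) ≤ 6·ν(C), where τ is the minimum number of points hitting every square of C and ν is the maximum number of pairwise disjoint squares in C. -/
open Classical MeasureTheory
noncomputable section

/-! ### Covering half of a neighbourhood of the unit square by six discs -/

/-- The point `(x, y)` is within distance `√2 / 2` of the axis-parallel unit square
centred at the origin. -/
def NearSquare (x y : ℝ) : Prop :=
  ∃ u v : ℝ, |u| ≤ 1 / 2 ∧ |v| ≤ 1 / 2 ∧ (x - u) ^ 2 + (y - v) ^ 2 ≤ 1 / 2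

/-- The points near the unit square on the nonnegative side of the line with normal `(a, b)`
can be covered by six discs of radius `1 / 2`. -/
def HalfCover (a b : ℝ) : Prop :=
  ∃ P : Finset (ℝ × ℝ), P.card ≤ 6 ∧ ∀ x y : ℝ, NearSquare x y → 0 ≤ a * x + b * y →
    ∃ p ∈ P, (x - p.1) ^ 2 + (y - p.2) ^ 2 ≤ 1 / 4

/-- With `16384` as unit length and `(20480, 20480)` as centre of the unit square, the box with
centre `(cx, cy)` and half-side `s` lies in one of the discs of radius `1 / 2` about the points
of `P`. -/
def boxInDisc (P : List (ℕ × ℕ)) (cx cy s : ℕ) : Bool :=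
  P.any fun p => Nat.ble
    ((cx - p.1 + (p.1 - cx) + s) * (cx - p.1 + (p.1 - cx) + s) +
      (cy - p.2 + (p.2 - cy) + s) * (cy - p.2 + (p.2 - cy) + s)) 67108864

/-- In the coordinates of `boxInDisc`, the box with centre `(cx, cy)` and half-side `s` misses
the `√2 / 2`-neighbourhood of the unit square. -/
def boxFar (cx cy s : ℕ) : Bool :=
  Nat.ble 134217729
    ((cx - (28672 + s) + (12288 - (cx + s))) * (cx - (28672 + s) + (12288 - (cx + s))) +
      (cy - (28672 + s) + (12288 - (cy + s))) * (cy - (28672 + s) + (12288 - (cy + s))))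

/-- In the coordinates of `boxInDisc`, the box with centre `(cx, cy)` and half-side `s` is
strictly below the line with normal `(k, 256)` through the centre of the unit square. -/
def boxBelow (k cx cy s : ℕ) : Bool :=
  Nat.blt (k * cx + 256 * cy + s * (k + 256)) ((k + 256) * 20480)

/-- Quadtree search, of depth `n`, certifying that inside the box with centre `(cx, cy)` and
half-side `5 * 2 ^ n` the discs about `P` cover all points near the unit square that lie above
one of the lines with normals `(k, 256)` and `(l, 256)` through its centre. -/
def boxCovered (P : List (ℕ × ℕ)) (k l : ℕ) : ℕ → ℕ → ℕ → Bool
  | 0, cx, cy => boxInDisc P cx cy 5 || boxFar cx cy 5 ||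
      (boxBelow k cx cy 5 && boxBelow l cx cy 5)
  | n + 1, cx, cy => boxInDisc P cx cy (5 <<< (n + 1)) || boxFar cx cy (5 <<< (n + 1)) ||
      (boxBelow k cx cy (5 <<< (n + 1)) && boxBelow l cx cy (5 <<< (n + 1))) ||
      (Nat.ble (5 <<< n) cx && Nat.ble (5 <<< n) cy &&
       boxCovered P k l n (cx - 5 <<< n) (cy - 5 <<< n) &&
       boxCovered P k l n (cx - 5 <<< n) (cy + 5 <<< n) &&
       boxCovered P k l n (cx + 5 <<< n) (cy - 5 <<< n) &&
       boxCovered P k l n (cx + 5 <<< n) (cy + 5 <<< n))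

lemma sub_sq_le_of_abs_sub_le {X : ℝ} {c p s : ℕ} (h : |X - c| ≤ s) :
    (X - p) ^ 2 ≤ ((c - p + (p - c) + s : ℕ) : ℝ) ^ 2 := by
  rw [abs_le] at h
  refine sq_le_sq' ?_ ?_ <;> rcases le_total c p with h0 | h0 <;>
    · simp only [Nat.sub_eq_zero_of_le h0, Nat.cast_add, Nat.cast_sub h0, Nat.cast_zero]
      have := (Nat.cast_le (α := ℝ)).2 h0
      linarith

lemma exists_disc_of_boxInDisc {P : List (ℕ × ℕ)} {cx cy s : ℕ}
    (h : boxInDisc P cx cy s = true) {X Y : ℝ} (hX : |X - cx| ≤ s) (hY : |Y - cy| ≤ s) :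
    ∃ p ∈ P, (X - p.1) ^ 2 + (Y - p.2) ^ 2 ≤ 67108864 := by
  simp only [boxInDisc, List.any_eq_true, Nat.ble_eq, ← sq] at h
  obtain ⟨p, hp, h⟩ := h
  refine ⟨p, hp, ?_⟩
  have h' := (Nat.cast_le (α := ℝ)).2 h
  rw [Nat.cast_add, Nat.cast_pow, Nat.cast_pow, Nat.cast_ofNat] at h'
  linarith [sub_sq_le_of_abs_sub_le (p := p.1) hX, sub_sq_le_of_abs_sub_le (p := p.2) hY]

lemma sq_le_sub_sq_of_abs_sub_le {X u : ℝ} {c s : ℕ} (h : |X - c| ≤ s) (hu : |u - 20480| ≤ 8192) :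
    ((c - (28672 + s) + (12288 - (c + s)) : ℕ) : ℝ) ^ 2 ≤ (X - u) ^ 2 := by
  rw [abs_le] at h hu
  obtain ⟨e, he⟩ : ∃ e, e = c - (28672 + s) + (12288 - (c + s)) := ⟨_, rfl⟩
  rw [← he, sq_le_sq, abs_of_nonneg (Nat.cast_nonneg _)]
  have hcases : e + (28672 + s) = c ∨ e + (c + s) = 12288 ∨ e = 0 := by omega
  rcases hcases with h0 | h0 | rfl
  · have h0' : (e : ℝ) + (28672 + s) = c := by exact_mod_cast h0
    exact le_abs.2 (Or.inl (by linarith))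
  · have h0' : (e : ℝ) + (c + s) = 12288 := by exact_mod_cast h0
    exact le_abs.2 (Or.inr (by linarith))
  · simp

lemma not_boxFar {cx cy s : ℕ} {X Y u v : ℝ} (hX : |X - cx| ≤ s) (hY : |Y - cy| ≤ s)
    (hu : |u - 20480| ≤ 8192) (hv : |v - 20480| ≤ 8192)
    (h : (X - u) ^ 2 + (Y - v) ^ 2 ≤ 134217728) : boxFar cx cy s ≠ true := by
  intro hf
  simp only [boxFar, Nat.ble_eq, ← sq] at hf
  have hf' := (Nat.cast_le (α := ℝ)).2 hf
  rw [Nat.cast_add, Nat.cast_pow, Nat.cast_pow, Nat.cast_ofNat] at hf'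
  linarith [sq_le_sub_sq_of_abs_sub_le hX hu, sq_le_sub_sq_of_abs_sub_le hY hv]

lemma neg_of_boxBelow {k cx cy s : ℕ} (h : boxBelow k cx cy s = true) {X Y : ℝ}
    (hX : |X - cx| ≤ s) (hY : |Y - cy| ≤ s) :
    (k : ℝ) * (X - 20480) + 256 * (Y - 20480) < 0 := by
  simp only [boxBelow, Nat.blt_eq] at h
  have h' : (k : ℝ) * cx + 256 * cy + s * (k + 256) < (k + 256) * 20480 := by exact_mod_cast h
  have h1 := mul_le_mul_of_nonneg_left (le_of_abs_le hX) (Nat.cast_nonneg (α := ℝ) k)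
  linarith [le_of_abs_le hY]

lemma abs_sub_halve {X c h : ℝ} (hX : |X - c| ≤ 2 * h) :
    |X - (c - h)| ≤ h ∨ |X - (c + h)| ≤ h := by
  rw [abs_le] at hX
  rcases le_total X c with h0 | h0
  · left; rw [abs_le]; constructor <;> linarith
  · right; rw [abs_le]; constructor <;> linarith

lemma exists_disc_of_boxCovered {P : List (ℕ × ℕ)} {k l : ℕ} {X Y u v : ℝ}
    (hu : |u - 20480| ≤ 8192) (hv : |v - 20480| ≤ 8192)
    (hXY : (X - u) ^ 2 + (Y - v) ^ 2 ≤ 134217728)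
    (hkl : 0 ≤ (k : ℝ) * (X - 20480) + 256 * (Y - 20480) ∨
      0 ≤ (l : ℝ) * (X - 20480) + 256 * (Y - 20480)) (n : ℕ) :
    ∀ cx cy : ℕ, boxCovered P k l n cx cy = true → |X - cx| ≤ (5 <<< n : ℕ) →
      |Y - cy| ≤ (5 <<< n : ℕ) → ∃ p ∈ P, (X - p.1) ^ 2 + (Y - p.2) ^ 2 ≤ 67108864 := by
  have leaf : ∀ cx cy s : ℕ, |X - cx| ≤ s → |Y - cy| ≤ s →
      (boxInDisc P cx cy s || boxFar cx cy s || (boxBelow k cx cy s && boxBelow l cx cy s)) = true →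
      ∃ p ∈ P, (X - p.1) ^ 2 + (Y - p.2) ^ 2 ≤ 67108864 := by
    intro cx cy s hX hY h
    rw [Bool.or_eq_true, Bool.or_eq_true, Bool.and_eq_true] at h
    rcases h with (h | h) | ⟨hk, hl⟩
    · exact exists_disc_of_boxInDisc h hX hY
    · exact absurd h (not_boxFar hX hY hu hv hXY)
    · have := neg_of_boxBelow hk hX hY
      have := neg_of_boxBelow hl hX hY
      rcases hkl with h | h <;> linarith
  induction n with
  | zero => exact fun cx cy h hX hY => leaf cx cy 5 (by simpa using hX) (by simpa using hY) h
  | succ n ih =>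
    intro cx cy h hX hY
    rw [boxCovered, Bool.or_eq_true] at h
    rcases h with h | h
    · exact leaf cx cy _ hX hY h
    simp only [Bool.and_eq_true, Nat.ble_eq] at h
    obtain ⟨⟨⟨⟨⟨hcx, hcy⟩, h1⟩, h2⟩, h3⟩, h4⟩ := h
    have e : ((5 <<< (n + 1) : ℕ) : ℝ) = 2 * ((5 <<< n : ℕ) : ℝ) := by
      rw [Nat.shiftLeft_eq, Nat.shiftLeft_eq]; push_cast; ring
    rw [e] at hX hY
    rcases abs_sub_halve hX with hX | hX <;> rcases abs_sub_halve hY with hY | hY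
    · exact ih _ _ h1 (by rwa [Nat.cast_sub hcx]) (by rwa [Nat.cast_sub hcy])
    · exact ih _ _ h2 (by rwa [Nat.cast_sub hcx]) (by rwa [Nat.cast_add])
    · exact ih _ _ h3 (by rwa [Nat.cast_add]) (by rwa [Nat.cast_sub hcy])
    · exact ih _ _ h4 (by rwa [Nat.cast_add]) (by rwa [Nat.cast_add])

lemma NearSquare.abs_le {x y : ℝ} (h : NearSquare x y) : |x| ≤ 5 / 4 ∧ |y| ≤ 5 / 4 := by
  obtain ⟨u, v, hu, hv, h⟩ := h
  have hx : |x - u| ≤ 3 / 4 := abs_le_of_sq_le_sq (by nlinarith [sq_nonneg (y - v)]) (by norm_num)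
  have hy : |y - v| ≤ 3 / 4 := abs_le_of_sq_le_sq (by nlinarith [sq_nonneg (x - u)]) (by norm_num)
  rw [_root_.abs_le] at hu hv hx hy
  refine ⟨?_, ?_⟩ <;> rw [_root_.abs_le] <;> constructor <;> linarith

lemma halfCover_of_boxCovered {P : List (ℕ × ℕ)} {k l : ℕ} {a b : ℝ} (hP : P.length ≤ 6)
    (h : boxCovered P k l 12 20480 20480 = true) (hb : 0 < b) (hk : k * b ≤ 256 * a)
    (hl : 256 * a ≤ l * b) : HalfCover a b := by
  refine ⟨(P.map fun p => (((p.1 : ℝ) - 20480) / 16384, ((p.2 : ℝ) - 20480) / 16384)).toFinset,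
    (List.toFinset_card_le _).trans (by simpa using hP), fun x y hxy hab => ?_⟩
  obtain ⟨hx, hy⟩ := hxy.abs_le
  obtain ⟨u, v, hu, hv, huv⟩ := hxy
  have scale : ∀ t r : ℝ, |t| ≤ r → |16384 * t + 20480 - 20480| ≤ 16384 * r := fun t r ht => by
    rw [add_sub_cancel_right, abs_mul, abs_of_pos (by norm_num : (0 : ℝ) < 16384)]
    linarith
  have hkl : 0 ≤ (k : ℝ) * (16384 * x + 20480 - 20480) + 256 * (16384 * y + 20480 - 20480) ∨
      0 ≤ (l : ℝ) * (16384 * x + 20480 - 20480) + 256 * (16384 * y + 20480 - 20480) := by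
    by_contra! hneg
    obtain ⟨hkn, hln⟩ := hneg
    have hkn : b * (k * x + 256 * y) < 0 := mul_neg_of_pos_of_neg hb (by linarith)
    have hln : b * (l * x + 256 * y) < 0 := mul_neg_of_pos_of_neg hb (by linarith)
    rcases le_total 0 x with h0 | h0
    · nlinarith [mul_le_mul_of_nonneg_right hl h0]
    · nlinarith [mul_le_mul_of_nonpos_right hk h0]
  have e : ((5 <<< 12 : ℕ) : ℝ) = 16384 * (5 / 4) := by
    rw [Nat.shiftLeft_eq]; norm_num
  obtain ⟨p, hp, hpd⟩ := exists_disc_of_boxCovered (X := 16384 * x + 20480)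
    (Y := 16384 * y + 20480) (u := 16384 * u + 20480) (v := 16384 * v + 20480)
    ((scale _ _ hu).trans (by norm_num)) ((scale _ _ hv).trans (by norm_num)) (by nlinarith)
    hkl 12 20480 20480 h (by rw [e]; exact scale _ _ hx) (by rw [e]; exact scale _ _ hy)
  refine ⟨_, List.mem_toFinset.2 (List.mem_map.2 ⟨p, hp, rfl⟩), ?_⟩
  dsimp only
  nlinarith

/-- Certificate check for a list of sectors: each entry `(l, P)` treats the normals `(a, b)` with
slope `a / b` between `k / 256` and `l / 256`, where `k` is the previous right end. -/
def sectorsCovered : ℕ → List (ℕ × List (ℕ × ℕ)) → Bool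
  | k, [] => decide (256 < k)
  | k, (l, P) :: L => decide (P.length ≤ 6) && boxCovered P k l 12 20480 20480 && sectorsCovered l L

lemma halfCover_of_sectorsCovered {a b : ℝ} (hb : 0 < b) (hab : a ≤ b)
    (L : List (ℕ × List (ℕ × ℕ))) : ∀ k : ℕ, sectorsCovered k L = true → k * b ≤ 256 * a →
      HalfCover a b := by
  induction L with
  | nil =>
    intro k hk hkb
    simp only [sectorsCovered, decide_eq_true_eq] at hk
    have hk' : (256 : ℝ) < k := by exact_mod_cast hk
    nlinarith
  | cons e L ih =>
    intro k hk hkb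
    obtain ⟨l, P⟩ := e
    simp only [sectorsCovered, Bool.and_eq_true, decide_eq_true_eq] at hk
    rcases le_total (256 * a) (l * b) with hl | hl
    · exact halfCover_of_boxCovered hk.1.1 hk.1.2 hb hkb hl
    · exact ih l hk.2 hl

/-- Disc centres, in the coordinates of `boxInDisc`, for the sectors with slopes from `0` to
`1`. -/
def sectors : List (ℕ × List (ℕ × ℕ)) :=
  [(18, [(20462, 23766), (6871, 25688), (8635, 33916),
     (34289, 24554), (20999, 36842), (32826, 33523)]),
   (38, [(34425, 23168), (20497, 24022), (22005, 37081),
     (33426, 33156), (9088, 34271), (7142, 26634)]),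
   (60, [(7324, 27766), (10015, 34487), (34645, 21722),
     (23247, 37149), (33747, 32465), (20495, 23815)]),
   (84, [(24994, 36833), (34129, 31479), (7712, 28912),
     (20602, 23840), (34748, 20029), (11159, 35186)]),
   (100, [(34758, 18806), (8249, 30011), (34371, 30534),
     (26551, 36616), (12555, 35535), (20726, 23759)]),
   (112, [(8516, 30620), (13890, 36268), (34547, 17694),
     (20795, 23882), (28040, 36048), (34679, 29528)]),
   (122, [(34543, 16997), (28892, 35592), (8670, 31016),
     (34727, 28876), (20862, 23690), (14910, 36498)]),
   (130, [(29652, 35198), (15874, 36697), (34792, 28200),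
     (8805, 31358), (34435, 16383), (20871, 23585)]),
   (138, [(16828, 37088), (34317, 15809), (30274, 34604),
     (8931, 31641), (20869, 23475), (34839, 27553)]),
   (147, [(20921, 23371), (34196, 15226), (17455, 36913),
     (9076, 31866), (34928, 26922), (30767, 34539)]),
   (157, [(20972, 23282), (34007, 14585), (18447, 37418),
     (9248, 32111), (35043, 26162), (31237, 33878)]),
   (169, [(21195, 23152), (33947, 14045), (18662, 37058),
     (9449, 32192), (35242, 25699), (31498, 34041)]),
   (183, [(19662, 37000), (21215, 22907), (35313, 24837),
     (9690, 32472), (33762, 13395), (31968, 33657)]),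
   (199, [(33531, 12739), (20261, 36956), (21433, 22804),
     (35590, 24053), (9961, 32607), (32316, 33513)]),
   (217, [(33376, 12193), (20813, 37003), (21665, 22629),
     (35875, 23428), (10259, 32713), (32521, 33296)]),
   (237, [(33074, 11602), (21839, 36936), (21710, 22436),
     (36065, 22402), (10651, 33035), (32915, 32958)]),
   (257, [(22075, 22345), (21975, 36779), (36509, 21947),
     (32938, 11210), (10959, 33009), (33111, 33048)])]

lemma sectorsCovered_sectors : sectorsCovered 0 sectors = true := by decide +kernel

lemma HalfCover.neg_left {a b : ℝ} (h : HalfCover a b) : HalfCover (-a) b := by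
  obtain ⟨P, hP, h⟩ := h
  refine ⟨P.image fun p => (-p.1, p.2), Finset.card_image_le.trans hP, fun x y hxy hab => ?_⟩
  obtain ⟨u, v, hu, hv, huv⟩ := hxy
  obtain ⟨p, hp, hpd⟩ := h (-x) y ⟨-u, v, by rwa [abs_neg], hv, by nlinarith⟩ (by linarith)
  exact ⟨_, Finset.mem_image_of_mem _ hp, by dsimp only; nlinarith⟩

lemma HalfCover.swap {a b : ℝ} (h : HalfCover a b) : HalfCover b a := by
  obtain ⟨P, hP, h⟩ := h
  refine ⟨P.image Prod.swap, Finset.card_image_le.trans hP, fun x y hxy hab => ?_⟩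
  obtain ⟨u, v, hu, hv, huv⟩ := hxy
  obtain ⟨p, hp, hpd⟩ := h y x ⟨v, u, hv, hu, by linarith⟩ (by linarith)
  exact ⟨_, Finset.mem_image_of_mem _ hp, by simp only [Prod.fst_swap, Prod.snd_swap]; linarith⟩

lemma halfCover_of_nonneg {a b : ℝ} (ha : 0 ≤ a) (hb : 0 ≤ b) (hab : a ≠ 0 ∨ b ≠ 0) :
    HalfCover a b := by
  have key : ∀ a b : ℝ, 0 ≤ a → 0 < b → a ≤ b → HalfCover a b := fun a b ha hb hab =>
    halfCover_of_sectorsCovered hb hab sectors 0 sectorsCovered_sectors (by simpa using ha)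
  rcases le_total a b with h | h
  · refine key a b ha (hb.lt_of_ne' fun h0 => ?_) h
    rcases hab with h' | h' <;> exact h' (by linarith)
  · refine (key b a hb (ha.lt_of_ne' fun h0 => ?_) h).swap
    rcases hab with h' | h' <;> exact h' (by linarith)

lemma halfCover {a b : ℝ} (hab : a ≠ 0 ∨ b ≠ 0) : HalfCover a b := by
  have h := halfCover_of_nonneg (abs_nonneg a) (abs_nonneg b) (by simpa using hab)
  have h1 : HalfCover a |b| := by
    rcases abs_choice a with e | e <;> rw [e] at h
    · exact h
    · simpa using h.neg_left
  rcases abs_choice b with e | e <;> rw [e] at h1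
  · exact h1
  · simpa using h1.swap.neg_left.swap

/-! ### Squares -/

lemma sqForm_sq_add_sq (c : Pt) (θ : ℝ) (x : Pt) :
    sqForm1 c θ x ^ 2 + sqForm2 c θ x ^ 2 = (x 0 - c 0) ^ 2 + (x 1 - c 1) ^ 2 := by
  unfold sqForm1 sqForm2
  linear_combination ((x 0 - c 0) ^ 2 + (x 1 - c 1) ^ 2) * Real.sin_sq_add_cos_sq θ

lemma sqForm_sub_sq_add_sq (c : Pt) (θ : ℝ) (x y : Pt) :
    (sqForm1 c θ x - sqForm1 c θ y) ^ 2 + (sqForm2 c θ x - sqForm2 c θ y) ^ 2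
      = (x 0 - y 0) ^ 2 + (x 1 - y 1) ^ 2 := by
  unfold sqForm1 sqForm2
  linear_combination ((x 0 - y 0) ^ 2 + (x 1 - y 1) ^ 2) * Real.sin_sq_add_cos_sq θ

lemma center_mem_sqSet (c : Pt) (θ : ℝ) : c ∈ sqSet c θ 1 := by
  simp [sqSet, sqForm1, sqForm2]

lemma mem_sqSet_of_dist {c p : Pt} (θ : ℝ) (h : (p 0 - c 0) ^ 2 + (p 1 - c 1) ^ 2 ≤ 1 / 4) :
    p ∈ sqSet c θ 1 := by
  rw [← sqForm_sq_add_sq c θ p] at h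
  exact ⟨abs_le_of_sq_le_sq (by nlinarith [sq_nonneg (sqForm2 c θ p)]) (by norm_num),
    abs_le_of_sq_le_sq (by nlinarith [sq_nonneg (sqForm1 c θ p)]) (by norm_num)⟩

lemma dist_of_mem_sqSet {c p : Pt} {θ : ℝ} (h : p ∈ sqSet c θ 1) :
    (p 0 - c 0) ^ 2 + (p 1 - c 1) ^ 2 ≤ 1 / 2 := by
  rw [← sqForm_sq_add_sq c θ p]
  have h1 := pow_le_pow_left₀ (abs_nonneg _) h.1 2
  have h2 := pow_le_pow_left₀ (abs_nonneg _) h.2 2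
  rw [sq_abs] at h1 h2
  linarith

lemma nearSquare_of_inter_nonempty {c d : Pt} {θ φ : ℝ}
    (h : (sqSet d φ 1 ∩ sqSet c θ 1).Nonempty) : NearSquare (sqForm1 c θ d) (sqForm2 c θ d) := by
  obtain ⟨q, hq, hq'⟩ := h
  refine ⟨_, _, hq'.1, hq'.2, ?_⟩
  rw [sqForm_sub_sq_add_sq]
  linarith [dist_of_mem_sqSet hq]

/-- The point with given coordinates in the frame with origin `c` rotated by `θ`. -/
def framePt (c : Pt) (θ : ℝ) (p : ℝ × ℝ) : Pt :=
  !₂[c 0 + Real.cos θ * p.1 + Real.sin θ * p.2, c 1 + Real.sin θ * p.1 - Real.cos θ * p.2]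

lemma sqForm1_framePt (c : Pt) (θ : ℝ) (p : ℝ × ℝ) : sqForm1 c θ (framePt c θ p) = p.1 := by
  simp only [sqForm1, framePt, PiLp.toLp_apply, Matrix.cons_val_zero, Matrix.cons_val_one]
  linear_combination p.1 * Real.sin_sq_add_cos_sq θ

lemma sqForm2_framePt (c : Pt) (θ : ℝ) (p : ℝ × ℝ) : sqForm2 c θ (framePt c θ p) = p.2 := by
  simp only [sqForm2, framePt, PiLp.toLp_apply, Matrix.cons_val_zero, Matrix.cons_val_one]
  linear_combination p.2 * Real.sin_sq_add_cos_sq θ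

/-- Six points hit all unit squares that meet a given one and whose centres are not below
its centre. -/
lemma exists_six_points (c : Pt) (θ : ℝ) : ∃ H : Finset Pt, H.card ≤ 6 ∧ ∀ (d : Pt) (φ : ℝ),
    c 1 ≤ d 1 → (sqSet d φ 1 ∩ sqSet c θ 1).Nonempty → ∃ p ∈ H, p ∈ sqSet d φ 1 := by
  have hne : Real.sin θ ≠ 0 ∨ -Real.cos θ ≠ 0 := by
    by_contra! h
    have h1 := Real.sin_sq_add_cos_sq θ
    have h2 : Real.cos θ = 0 := by linarith [h.2]
    rw [h.1, h2] at h1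
    norm_num at h1
  obtain ⟨P, hP, h⟩ := halfCover hne
  refine ⟨P.image (framePt c θ), Finset.card_image_le.trans hP, fun d φ hd hi => ?_⟩
  have hup : Real.sin θ * sqForm1 c θ d + -Real.cos θ * sqForm2 c θ d = d 1 - c 1 := by
    unfold sqForm1 sqForm2
    linear_combination (d 1 - c 1) * Real.sin_sq_add_cos_sq θ
  obtain ⟨p, hp, hpd⟩ := h _ _ (nearSquare_of_inter_nonempty hi) (by rw [hup]; linarith)
  refine ⟨_, Finset.mem_image_of_mem _ hp, mem_sqSet_of_dist φ ?_⟩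
  rw [← sqForm_sub_sq_add_sq c θ, sqForm1_framePt, sqForm2_framePt]
  linarith

/-- Greedy choice of a packing together with a hitting set at most six times as large. -/
lemma exists_hits_packing (C : Finset (Set Pt)) (h : ∀ S ∈ C, IsUnitSquare S) :
    ∃ H : Finset Pt, Hits H C ∧ ∃ P ⊆ C, (P : Set (Set Pt)).Pairwise Disjoint ∧
      H.card ≤ 6 * P.card := by
  induction C using Finset.strongInduction with
  | H C ih =>
  rcases C.eq_empty_or_nonempty with rfl | hne
  · exact ⟨∅, by simp [Hits], ∅, by simp⟩
  choose! ctr ang hsq using h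
  obtain ⟨S, hS, hmin⟩ := C.exists_min_image (fun S => ctr S 1) hne
  obtain ⟨H₀, hH₀, hhit⟩ := exists_six_points (ctr S) (ang S)
  have hSS : ¬ Disjoint S S := by
    rw [Set.not_disjoint_iff_nonempty_inter, Set.inter_self, hsq S hS]
    exact ⟨_, center_mem_sqSet _ _⟩
  obtain ⟨H, hH, P, hPC, hPd, hcard⟩ := ih (C.filter fun T => Disjoint T S)
    (Finset.filter_ssubset.2 ⟨S, hS, hSS⟩)
    fun T hT => ⟨_, _, hsq T (Finset.mem_of_mem_filter T hT)⟩
  have hSP : S ∉ P := fun hmem => hSS (Finset.mem_filter.1 (hPC hmem)).2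
  refine ⟨H₀ ∪ H, fun T hT => ?_, insert S P,
    Finset.insert_subset hS (hPC.trans (Finset.filter_subset _ _)), ?_, ?_⟩
  · by_cases hd : Disjoint T S
    · obtain ⟨p, hp, hpT⟩ := hH T (Finset.mem_filter.2 ⟨hT, hd⟩)
      exact ⟨p, Finset.mem_union_right _ hp, hpT⟩
    · rw [Set.not_disjoint_iff_nonempty_inter, hsq T hT, hsq S hS] at hd
      obtain ⟨p, hp, hpT⟩ := hhit _ _ (hmin T hT) hd
      exact ⟨p, Finset.mem_union_left _ hp, by rwa [hsq T hT]⟩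
  · rw [Finset.coe_insert]
    refine hPd.insert fun T hT _ => ?_
    have hd := (Finset.mem_filter.1 (hPC hT)).2
    exact ⟨hd.symm, hd⟩
  · rw [Finset.card_insert_of_notMem hSP]
    have := Finset.card_union_le H₀ H
    omega

theorem stmt_14 (C : Finset (Set Pt)) (h : ∀ S ∈ C, IsUnitSquare S) :
    hitNum C ≤ 6 * packNum C := by
  obtain ⟨H, hH, P, hPC, hPd, hcard⟩ := exists_hits_packing C h
  have h1 : hitNum C ≤ H.card := Nat.sInf_le ⟨H, rfl, hH⟩
  have h2 : P.card ≤ packNum C := by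
    refine le_csSup ⟨C.card, ?_⟩ ⟨P, hPC, rfl, hPd⟩
    rintro n ⟨Q, hQ, rfl, -⟩
    exact Finset.card_le_card hQ
  omega
end
end

section
/- If C is a finite family of (possibly rotated) squares of arbitrary sizes in the plane, then τ(C) ≤ 10·ν(C). -/
open Classical MeasureTheory
noncomputable section

namespace SquarePiercing

/-! ### Piercing all large squares that meet a fixed square

In the frame of the fixed square, scaled so that it is `[-25, 25]²`, ten integer points pierce every
square of half side at least `25` meeting it. A square of half side `25` is described by the
direction `(c, s)` of a side and the coordinates `(u, w)` of its centre in the rotated frame. -/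

/-- Ten points piercing every square of half side `25` that meets `[-25, 25]²`. -/
def piercingPoints : List (ℤ × ℤ) :=
  [(39, 39), (-39, -39), (33, -33), (-33, 33), (8, 8), (-8, -8),
    (56, -2), (-56, 2), (-2, 56), (2, -56)]

/-- The quadratic form `A x² + B x y + D y²` has nonnegative coefficients in the generators
`e`, `f`, hence is nonnegative on the cone they span. -/
def FormNonneg (e f : ℤ × ℤ) (A B D : ℤ) : Prop :=
  0 ≤ A * e.1 * e.1 + B * e.1 * e.2 + D * e.2 * e.2 ∧
  0 ≤ A * f.1 * f.1 + B * f.1 * f.2 + D * f.2 * f.2 ∧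
  0 ≤ 2 * A * e.1 * f.1 + B * (e.1 * f.2 + e.2 * f.1) + 2 * D * e.2 * f.2

instance (e f : ℤ × ℤ) (A B D : ℤ) : Decidable (FormNonneg e f A B D) :=
  inferInstanceAs (Decidable (_ ∧ _ ∧ _))

lemma FormNonneg.nonneg {e f : ℤ × ℤ} {A B D : ℤ} (h : FormNonneg e f A B D)
    {a b x y : ℝ} (ha : 0 ≤ a) (hb : 0 ≤ b) (hx : x = a * e.1 + b * f.1)
    (hy : y = a * e.2 + b * f.2) : 0 ≤ A * x ^ 2 + B * (x * y) + D * y ^ 2 := by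
  obtain ⟨he, hf, hef⟩ := h
  have he' : (0 : ℝ) ≤ A * e.1 * e.1 + B * e.1 * e.2 + D * e.2 * e.2 := by exact_mod_cast he
  have hf' : (0 : ℝ) ≤ A * f.1 * f.1 + B * f.1 * f.2 + D * f.2 * f.2 := by exact_mod_cast hf
  have hef' : (0 : ℝ) ≤ 2 * A * e.1 * f.1 + B * (e.1 * f.2 + e.2 * f.1) + 2 * D * e.2 * f.2 := by
    exact_mod_cast hef
  have key := add_nonneg (add_nonneg (mul_nonneg (mul_nonneg ha ha) he')
    (mul_nonneg (mul_nonneg hb hb) hf')) (mul_nonneg (mul_nonneg ha hb) hef')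
  subst hx hy
  linarith

/-- `α + β c + γ s` is certified nonnegative for unit vectors `(c, s)` such that the tangent of half
their angle lies in `[k / 12, (k + 1) / 12]`. -/
def LinNonneg (k α β γ : ℤ) : Prop :=
  FormNonneg (12, k) (12, k + 1) (α + β) (2 * γ) (α - β)

/-- `A c² + B c s + D s²` is certified nonnegative for unit vectors `(c, s)` such that the tangent
of half their angle lies in `[k / 12, (k + 1) / 12]`. -/
def QuadNonneg (k A B D : ℤ) : Prop :=
  FormNonneg (144 - k ^ 2, 24 * k) (144 - (k + 1) ^ 2, 24 * (k + 1)) A B D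

instance (k α β γ : ℤ) : Decidable (LinNonneg k α β γ) :=
  inferInstanceAs (Decidable (FormNonneg _ _ _ _ _))

instance (k A B D : ℤ) : Decidable (QuadNonneg k A B D) :=
  inferInstanceAs (Decidable (FormNonneg _ _ _ _ _))

/-- `(c, s)` is a unit vector such that the tangent of half its angle lies in
`[k / 12, (k + 1) / 12]`. -/
def InSector (k : ℤ) (c s : ℝ) : Prop :=
  ∃ p q : ℝ, p ^ 2 + q ^ 2 = 1 ∧ c = p ^ 2 - q ^ 2 ∧ s = 2 * (p * q) ∧
    k * p ≤ 12 * q ∧ 12 * q ≤ (k + 1) * p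

lemma LinNonneg.nonneg {k α β γ : ℤ} (h : LinNonneg k α β γ) {c s : ℝ} (hcs : InSector k c s) :
    0 ≤ α + β * c + γ * s := by
  obtain ⟨p, q, hpq, rfl, rfl, h₁, h₂⟩ := hcs
  have := FormNonneg.nonneg h (a := ((k + 1) * p - 12 * q) / 12) (b := (12 * q - k * p) / 12)
    (x := p) (y := q) (by linarith) (by linarith) (by push_cast; ring) (by push_cast; ring)
  push_cast at this
  have hα : (α : ℝ) = α * (p ^ 2 + q ^ 2) := by rw [hpq, mul_one]
  linarith

lemma QuadNonneg.nonneg {k A B D : ℤ} (h : QuadNonneg k A B D) (hk : 0 ≤ k) {c s : ℝ}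
    (hcs : InSector k c s) : 0 ≤ A * c ^ 2 + B * (c * s) + D * s ^ 2 := by
  obtain ⟨p, q, hpq, rfl, rfl, h₁, h₂⟩ := hcs
  have hk' : (0 : ℝ) ≤ k := by exact_mod_cast hk
  obtain ⟨a, ha⟩ : ∃ a, a = ((k + 1) * p - 12 * q) / 12 := ⟨_, rfl⟩
  obtain ⟨b, hb⟩ : ∃ b, b = (12 * q - k * p) / 12 := ⟨_, rfl⟩
  have ha₀ : 0 ≤ a := by rw [ha]; linarith
  have hb₀ : 0 ≤ b := by rw [hb]; linarith
  have hp : p = 12 * a + 12 * b := by rw [ha, hb]; ring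
  have hq : q = k * a + (k + 1) * b := by rw [ha, hb]; ring
  have hd : (0 : ℝ) < 144 + k * (k + 1) := by positivity
  refine FormNonneg.nonneg h
    (a := a ^ 2 + a * b * ((144 + (k + 1) ^ 2) / (144 + k * (k + 1))))
    (b := b ^ 2 + a * b * ((144 + k ^ 2) / (144 + k * (k + 1))))
    (by positivity) (by positivity) ?_ ?_
  · rw [hp, hq]
    push_cast
    field_simp
    ring
  · rw [hp, hq]
    push_cast
    field_simp
    ring

/-- An open box in the rotated frame: its sides lie at distance `25` from points of the lists. -/
structure Box where
  /-- points bounding the first coordinate from below -/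
  left : List (ℤ × ℤ)
  /-- points bounding the first coordinate from above -/
  right : List (ℤ × ℤ)
  /-- points bounding the second coordinate from below -/
  bottom : List (ℤ × ℤ)
  /-- points bounding the second coordinate from above -/
  top : List (ℤ × ℤ)

/-- The point `(u, w)` of the frame rotated by `(c, s)` lies in the box. -/
def Box.Contains (β : Box) (c s u w : ℝ) : Prop :=
  (∀ P ∈ β.left, c * P.1 + s * P.2 + 25 < u) ∧ (∀ P ∈ β.right, u < c * P.1 + s * P.2 - 25) ∧
  (∀ P ∈ β.bottom, -s * P.1 + c * P.2 + 25 < w) ∧ (∀ P ∈ β.top, w < -s * P.1 + c * P.2 - 25)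

/-- A square of half side `25` with centre `(u, w)` in the frame rotated by `(c, s)` is not
separated from `[-25, 25]²` by a direction of a side of either square. -/
structure Touches (c s u w : ℝ) : Prop where
  fst : |u| ≤ 25 * (1 + c + s)
  snd : |w| ≤ 25 * (1 + c + s)
  horizontal : |c * u - s * w| ≤ 25 * (1 + c + s)
  vertical : |s * u + c * w| ≤ 25 * (1 + c + s)

/-- A certificate that the box contains no centre of a square touching `[-25, 25]²`. -/
def Box.Closed (k : ℤ) (β : Box) : Prop :=
  (∃ P ∈ β.left, LinNonneg k 0 (P.1 - 25) (P.2 - 25)) ∨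
  (∃ P ∈ β.right, LinNonneg k 0 (-P.1 - 25) (-P.2 - 25)) ∨
  (∃ P ∈ β.bottom, LinNonneg k 0 (P.2 - 25) (-P.1 - 25)) ∨
  (∃ P ∈ β.top, LinNonneg k 0 (-P.2 - 25) (P.1 - 25)) ∨
  (∃ P ∈ β.left, ∃ R ∈ β.right, LinNonneg k 50 (P.1 - R.1) (P.2 - R.2)) ∨
  (∃ P ∈ β.bottom, ∃ R ∈ β.top, LinNonneg k 50 (P.2 - R.2) (R.1 - P.1)) ∨
  (∃ P ∈ β.left, ∃ R ∈ β.bottom, QuadNonneg k (R.2 - 25) (P.1 - R.1) (P.2 - 25)) ∨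
  (∃ P ∈ β.right, ∃ R ∈ β.bottom, QuadNonneg k (-P.1 - 25) (R.2 - P.2) (-R.1 - 25)) ∨
  (∃ P ∈ β.left, ∃ R ∈ β.top, QuadNonneg k (P.1 - 25) (P.2 - R.2) (R.1 - 25)) ∨
  (∃ P ∈ β.right, ∃ R ∈ β.top, QuadNonneg k (-R.2 - 25) (R.1 - P.1) (-P.2 - 25))

instance (k : ℤ) (β : Box) : Decidable (β.Closed k) :=
  inferInstanceAs (Decidable (_ ∨ _ ∨ _ ∨ _ ∨ _ ∨ _ ∨ _ ∨ _ ∨ _ ∨ _))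

lemma Box.Closed.not_contains {k : ℤ} {β : Box} (h : β.Closed k) (hk : 0 ≤ k) {c s u w : ℝ}
    (hcs : InSector k c s) (hc : 0 < c) (hs : 0 ≤ s) (hT : Touches c s u w) :
    ¬ β.Contains c s u w := by
  rintro ⟨hl, hr, hb, ht⟩
  have hunit : c ^ 2 + s ^ 2 = 1 := by
    obtain ⟨p, q, hpq, rfl, rfl, -, -⟩ := hcs
    linear_combination (p ^ 2 + q ^ 2 + 1) * hpq
  obtain ⟨hu₁, hu₂⟩ := abs_le.1 hT.fst
  obtain ⟨hw₁, hw₂⟩ := abs_le.1 hT.snd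
  obtain ⟨hx₁, hx₂⟩ := abs_le.1 hT.horizontal
  obtain ⟨hy₁, hy₂⟩ := abs_le.1 hT.vertical
  rcases h with ⟨P, hP, h⟩ | ⟨P, hP, h⟩ | ⟨P, hP, h⟩ | ⟨P, hP, h⟩ | ⟨P, hP, R, hR, h⟩ |
    ⟨P, hP, R, hR, h⟩ | ⟨P, hP, R, hR, h⟩ | ⟨P, hP, R, hR, h⟩ | ⟨P, hP, R, hR, h⟩ |
    ⟨P, hP, R, hR, h⟩
  · have := h.nonneg hcs
    push_cast at this
    linarith [hl P hP]
  · have := h.nonneg hcs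
    push_cast at this
    linarith [hr P hP]
  · have := h.nonneg hcs
    push_cast at this
    linarith [hb P hP]
  · have := h.nonneg hcs
    push_cast at this
    linarith [ht P hP]
  · have := h.nonneg hcs
    push_cast at this
    linarith [hl P hP, hr R hR]
  · have := h.nonneg hcs
    push_cast at this
    linarith [hb P hP, ht R hR]
  · have := h.nonneg hk hcs
    push_cast at this
    linarith [mul_le_mul_of_nonneg_left (hl P hP).le hs, mul_lt_mul_of_pos_left (hb R hR) hc]
  · have := h.nonneg hk hcs
    push_cast at this
    linarith [mul_lt_mul_of_pos_left (hr P hP) hc, mul_le_mul_of_nonneg_left (hb R hR).le hs]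
  · have := h.nonneg hk hcs
    push_cast at this
    linarith [mul_lt_mul_of_pos_left (hl P hP) hc, mul_le_mul_of_nonneg_left (ht R hR).le hs]
  · have := h.nonneg hk hcs
    push_cast at this
    linarith [mul_le_mul_of_nonneg_left (hr P hP).le hs, mul_lt_mul_of_pos_left (ht R hR) hc]

/-- A decision tree: a centre whose square misses the point at a node lies to the right of, to the
left of, above or below the square of half side `25` around that point. -/
inductive SplitTree
  | leaf : SplitTree
  | node (P : ℤ × ℤ) (right left above below : SplitTree) : SplitTree

/-- The tree certifies that every square with centre in the box touching `[-25, 25]²` is pierced. -/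
def SplitTree.check (k : ℤ) : SplitTree → Box → Bool
  | .leaf, β => decide (β.Closed k)
  | .node P r l a b, β =>
    decide (P ∈ piercingPoints) &&
    (r.check k { β with left := P :: β.left } && (l.check k { β with right := P :: β.right } &&
    (a.check k { β with bottom := P :: β.bottom } && b.check k { β with top := P :: β.top })))

/-- The square of half side `ρ` with centre `(u, w)` in the frame rotated by `(c, s)` contains a
piercing point. -/
def Pierced (c s u w ρ : ℝ) : Prop :=
  ∃ P ∈ piercingPoints, |c * P.1 + s * P.2 - u| ≤ ρ ∧ |-s * P.1 + c * P.2 - w| ≤ ρ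

lemma SplitTree.pierced_of_check {k : ℤ} (hk : 0 ≤ k) {c s u w : ℝ} (hcs : InSector k c s)
    (hc : 0 < c) (hs : 0 ≤ s) (hT : Touches c s u w) (t : SplitTree) (β : Box)
    (ht : t.check k β = true) (hβ : β.Contains c s u w) : Pierced c s u w 25 := by
  induction t generalizing β with
  | leaf => exact absurd hβ ((of_decide_eq_true ht).not_contains hk hcs hc hs hT)
  | node P r l a b ihr ihl iha ihb =>
    simp only [SplitTree.check, Bool.and_eq_true, decide_eq_true_eq] at ht
    obtain ⟨hP, hr, hl, ha, hb⟩ := ht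
    obtain ⟨hβl, hβr, hβb, hβt⟩ := hβ
    by_cases h₁ : c * P.1 + s * P.2 + 25 < u
    · exact ihr _ hr ⟨List.forall_mem_cons.2 ⟨h₁, hβl⟩, hβr, hβb, hβt⟩
    by_cases h₂ : u < c * P.1 + s * P.2 - 25
    · exact ihl _ hl ⟨hβl, List.forall_mem_cons.2 ⟨h₂, hβr⟩, hβb, hβt⟩
    by_cases h₃ : -s * P.1 + c * P.2 + 25 < w
    · exact iha _ ha ⟨hβl, hβr, List.forall_mem_cons.2 ⟨h₃, hβb⟩, hβt⟩
    by_cases h₄ : w < -s * P.1 + c * P.2 - 25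
    · exact ihb _ hb ⟨hβl, hβr, hβb, List.forall_mem_cons.2 ⟨h₄, hβt⟩⟩
    exact ⟨P, hP, abs_le.2 ⟨by linarith, by linarith⟩, abs_le.2 ⟨by linarith, by linarith⟩⟩

open SplitTree in
/-- The decision tree for squares rotated by at most `π / 4`. -/
def piercingTree : SplitTree :=
  node (8, 8)
    (node (39, 39)
      leaf
      leaf
      (node (-2, 56) leaf leaf leaf leaf)
      (node (56, -2) leaf leaf leaf (node (33, -33) leaf leaf leaf leaf)))
    (node (-8, -8)
      leaf
      (node (-39, -39)
        leaf
        leaf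
        (node (-56, 2) leaf leaf (node (-33, 33) leaf leaf leaf leaf) leaf)
        (node (2, -56) leaf leaf leaf leaf))
      (node (-33, 33) leaf (node (-56, 2) leaf leaf leaf leaf) leaf leaf)
      (node (2, -56) leaf (node (-39, -39) leaf leaf leaf leaf) leaf leaf))
    (node (-33, 33)
      (node (-2, 56) (node (39, 39) leaf leaf leaf leaf) leaf leaf leaf)
      (node (-56, 2) leaf leaf leaf leaf)
      leaf
      leaf)
    (node (33, -33)
      (node (56, -2) leaf leaf leaf leaf)
      (node (-39, -39)
        (node (-8, -8) leaf leaf leaf (node (2, -56) leaf leaf leaf leaf))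
        leaf
        leaf
        (node (2, -56) leaf leaf leaf leaf))
      leaf
      leaf)

lemma piercingTree_check :
    ∀ k ∈ ([0, 1, 2, 3, 4] : List ℤ), piercingTree.check k ⟨[], [], [], []⟩ = true := by
  decide

lemma exists_inSector {c s : ℝ} (h : c ^ 2 + s ^ 2 = 1) (hs : 0 ≤ s) (hsc : s ≤ c) :
    ∃ k ∈ ([0, 1, 2, 3, 4] : List ℤ), InSector k c s := by
  have hc : 0 < c := by nlinarith
  have hc₁ : c ≤ 1 := by nlinarith
  obtain ⟨p, hp⟩ : ∃ p, p = √((1 + c) / 2) := ⟨_, rfl⟩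
  have hp₀ : 0 < p := by rw [hp]; positivity
  have hp₂ : p ^ 2 = (1 + c) / 2 := by rw [hp, Real.sq_sqrt (by linarith)]
  obtain ⟨q, hq⟩ : ∃ q, q = s / (2 * p) := ⟨_, rfl⟩
  have hspq : s = 2 * (p * q) := by rw [hq]; field_simp
  have hq₀ : 0 ≤ q := by rw [hq]; positivity
  have hq₂ : q ^ 2 = (1 - c) / 2 := by
    rw [hq, div_pow, mul_pow, hp₂]
    field_simp
    linarith
  have hqp : 12 * q ≤ 5 * p := by
    by_contra! hlt
    nlinarith
  have key : ∀ k : ℤ, k * p ≤ 12 * q → 12 * q ≤ (k + 1) * p → InSector k c s :=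
    fun k h₁ h₂ => ⟨p, q, by linarith, by linarith, hspq, h₁, h₂⟩
  rcases le_total (12 * q) p with h₁ | h₁
  · exact ⟨0, by simp, key 0 (by push_cast; linarith) (by push_cast; linarith)⟩
  rcases le_total (12 * q) (2 * p) with h₂ | h₂
  · exact ⟨1, by simp, key 1 (by push_cast; linarith) (by push_cast; linarith)⟩
  rcases le_total (12 * q) (3 * p) with h₃ | h₃
  · exact ⟨2, by simp, key 2 (by push_cast; linarith) (by push_cast; linarith)⟩
  rcases le_total (12 * q) (4 * p) with h₄ | h₄
  · exact ⟨3, by simp, key 3 (by push_cast; linarith) (by push_cast; linarith)⟩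
  · exact ⟨4, by simp, key 4 (by push_cast; linarith) (by push_cast; linarith)⟩

lemma pierced_of_touches {c s u w : ℝ} (h : c ^ 2 + s ^ 2 = 1) (hs : 0 ≤ s) (hsc : s ≤ c)
    (hT : Touches c s u w) : Pierced c s u w 25 := by
  obtain ⟨k, hk, hcs⟩ := exists_inSector h hs hsc
  have hk₀ : 0 ≤ k := by
    revert k
    simp
  exact SplitTree.pierced_of_check hk₀ hcs (by nlinarith) hs hT piercingTree _
    (piercingTree_check k hk) (by simp [Box.Contains])

lemma touches_of_mem {c s u w x y : ℝ} (h : c ^ 2 + s ^ 2 = 1) (hs : 0 ≤ s) (hc : 0 ≤ c)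
    (hx : |x| ≤ 25) (hy : |y| ≤ 25) (hu : |c * x + s * y - u| ≤ 25)
    (hw : |-s * x + c * y - w| ≤ 25) : Touches c s u w := by
  have habs : ∀ a b : ℝ, |a| ≤ 25 → |b| ≤ 25 → |c * a + s * b| ≤ 25 * (c + s) := by
    intro a b ha hb
    calc |c * a + s * b| ≤ |c * a| + |s * b| := abs_add_le _ _
      _ = c * |a| + s * |b| := by rw [abs_mul, abs_mul, abs_of_nonneg hc, abs_of_nonneg hs]
      _ ≤ c * 25 + s * 25 := by gcongr
      _ = 25 * (c + s) := by ring
  have hx' := abs_le.1 hx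
  have hy' := abs_le.1 hy
  have hu' := abs_le.1 hu
  have hw' := abs_le.1 hw
  have h₁ := abs_le.1 (habs x y hx hy)
  have h₂ := abs_le.1 (habs y (-x) hy (by rwa [abs_neg]))
  have h₃ := abs_le.1 (habs _ (-(-s * x + c * y - w)) hu (by rwa [abs_neg]))
  have h₄ := abs_le.1 (habs _ _ hw hu)
  have hX : c * (c * x + s * y) - s * (-s * x + c * y) = x := by linear_combination x * h
  have hY : s * (c * x + s * y) + c * (-s * x + c * y) = y := by linear_combination y * h
  constructor <;> rw [abs_le] <;> constructor <;> linarith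

lemma Pierced.swap {c s u w ρ : ℝ} (h : Pierced s c u (-w) ρ) : Pierced c s u w ρ := by
  obtain ⟨P, hP, h₁, h₂⟩ := h
  have hswap : ∀ P ∈ piercingPoints, P.swap ∈ piercingPoints := by decide
  refine ⟨P.swap, hswap P hP, ?_, ?_⟩
  · convert h₁ using 2
    simp only [Prod.fst_swap, Prod.snd_swap]
    ring
  · rw [← abs_neg]
    convert h₂ using 2
    simp only [Prod.fst_swap, Prod.snd_swap]
    ring

lemma Pierced.rotate {c s u w ρ : ℝ} (h : Pierced (-s) c w (-u) ρ) : Pierced c s u w ρ := by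
  obtain ⟨P, hP, h₁, h₂⟩ := h
  refine ⟨P, hP, ?_, h₁⟩
  rw [← abs_neg]
  convert h₂ using 2
  ring

lemma pierced_of_mem_of_nonneg {c s u w x y : ℝ} (h : c ^ 2 + s ^ 2 = 1) (hc : 0 ≤ c) (hs : 0 ≤ s)
    (hx : |x| ≤ 25) (hy : |y| ≤ 25) (hu : |c * x + s * y - u| ≤ 25)
    (hw : |-s * x + c * y - w| ≤ 25) : Pierced c s u w 25 := by
  rcases le_total s c with hsc | hsc
  · exact pierced_of_touches h hs hsc (touches_of_mem h hs hc hx hy hu hw)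
  · refine (pierced_of_touches (by linarith) hc hsc
      (touches_of_mem (x := y) (y := x) (by linarith) hc hs hy hx ?_ ?_)).swap
    · rwa [add_comm (s * y)]
    · rw [← abs_neg]
      convert hw using 2
      ring

lemma pierced_of_mem {c s u w x y : ℝ} (h : c ^ 2 + s ^ 2 = 1)
    (hx : |x| ≤ 25) (hy : |y| ≤ 25) (hu : |c * x + s * y - u| ≤ 25)
    (hw : |-s * x + c * y - w| ≤ 25) : Pierced c s u w 25 := by
  have hu' : |-c * x + -s * y - -u| ≤ 25 := by
    rw [← abs_neg]
    convert hu using 2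
    ring
  have hw' : |s * x + -c * y - -w| ≤ 25 := by
    rw [← abs_neg]
    convert hw using 2
    ring
  rcases le_total 0 c with hc | hc <;> rcases le_total 0 s with hs | hs
  · exact pierced_of_mem_of_nonneg h hc hs hx hy hu hw
  · exact (pierced_of_mem_of_nonneg (by linarith) (by linarith) hc hx hy hw hu').rotate
  · refine Pierced.rotate (Pierced.rotate (Pierced.rotate
      (pierced_of_mem_of_nonneg (by linarith) ?_ ?_ hx hy ?_ ?_)))
    · linarith
    · linarith
    · simpa using hw'
    · simpa using hu
  · refine Pierced.rotate (Pierced.rotate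
      (pierced_of_mem_of_nonneg (by linarith) ?_ ?_ hx hy ?_ ?_))
    · linarith
    · linarith
    · simpa using hu'
    · simpa using hw'

/-- Every square of half side at least `25` meeting `[-25, 25]²` contains a piercing point. -/
lemma pierced_of_mem_of_le {c s u w x y ρ : ℝ} (h : c ^ 2 + s ^ 2 = 1) (hρ : 25 ≤ ρ)
    (hx : |x| ≤ 25) (hy : |y| ≤ 25) (hu : |c * x + s * y - u| ≤ ρ)
    (hw : |-s * x + c * y - w| ≤ ρ) : Pierced c s u w ρ := by
  have hρ₀ : 0 < ρ := by linarith
  have shrink : ∀ a v : ℝ, |a - v| ≤ ρ → ∃ v', |a - v'| ≤ 25 ∧ |v' - v| ≤ ρ - 25 := by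
    intro a v ha
    have hq : 25 / ρ ≤ 1 := (div_le_one hρ₀).2 hρ
    refine ⟨a - (a - v) * (25 / ρ), ?_, ?_⟩
    · rw [sub_sub_cancel, abs_mul, abs_of_nonneg (by positivity : 0 ≤ 25 / ρ)]
      calc |a - v| * (25 / ρ) ≤ ρ * (25 / ρ) := by gcongr
        _ = 25 := by field_simp
    · rw [show a - (a - v) * (25 / ρ) - v = (a - v) * (1 - 25 / ρ) by ring, abs_mul,
        abs_of_nonneg (by linarith : 0 ≤ 1 - 25 / ρ)]
      calc |a - v| * (1 - 25 / ρ) ≤ ρ * (1 - 25 / ρ) :=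
            mul_le_mul_of_nonneg_right ha (by linarith)
        _ = ρ - 25 := by field_simp
  obtain ⟨u', hu₁, hu₂⟩ := shrink _ u hu
  obtain ⟨w', hw₁, hw₂⟩ := shrink _ w hw
  obtain ⟨P, hP, h₁, h₂⟩ := pierced_of_mem h hx hy hu₁ hw₁
  refine ⟨P, hP, ?_, ?_⟩
  · linarith [abs_sub_le (c * P.1 + s * P.2) u' u]
  · linarith [abs_sub_le (-s * P.1 + c * P.2) w' w]

/-! ### Transfer to arbitrary squares -/

/-- The point with coordinates `r * (x, y)` in the frame of a square with centre `c` and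
angle `φ`. -/
def framePoint (c : Pt) (φ r x y : ℝ) : Pt :=
  !₂[c 0 + r * (Real.cos φ * x + Real.sin φ * y), c 1 + r * (Real.sin φ * x - Real.cos φ * y)]

lemma framePoint_sqForm (c : Pt) (φ : ℝ) {r : ℝ} (hr : r ≠ 0) (z : Pt) :
    framePoint c φ r (sqForm1 c φ z / r) (sqForm2 c φ z / r) = z := by
  have := Real.sin_sq_add_cos_sq φ
  ext i
  fin_cases i
  · simp only [framePoint, sqForm1, sqForm2]
    field_simp
    simp
    linear_combination (z 0 - c 0) * this
  · simp only [framePoint, sqForm1, sqForm2]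
    field_simp
    simp
    linear_combination (z 1 - c 1) * this

lemma sqForm1_framePoint (c m : Pt) (φ θ r x y : ℝ) :
    sqForm1 m θ (framePoint c φ r x y) =
      sqForm1 m θ c + r * (Real.cos (θ - φ) * x + -Real.sin (θ - φ) * y) := by
  simp [sqForm1, framePoint, Real.cos_sub, Real.sin_sub]
  ring

lemma sqForm2_framePoint (c m : Pt) (φ θ r x y : ℝ) :
    sqForm2 m θ (framePoint c φ r x y) =
      sqForm2 m θ c + r * (Real.sin (θ - φ) * x + Real.cos (θ - φ) * y) := by
  simp [sqForm2, framePoint, Real.cos_sub, Real.sin_sub]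
  ring

/-- The ten points piercing all squares at least as large as the given square and meeting it. -/
def piercingSet (c : Pt) (φ a : ℝ) : Finset Pt :=
  piercingPoints.toFinset.image fun P => framePoint c φ (a / 50) P.1 P.2

lemma card_piercingSet_le (c : Pt) (φ a : ℝ) : (piercingSet c φ a).card ≤ 10 :=
  Finset.card_image_le.trans (List.toFinset_card_le _)

lemma exists_mem_piercingSet {c m : Pt} {φ θ a b : ℝ} (ha : 0 < a) (hab : a ≤ b)
    (h : (sqSet m θ b ∩ sqSet c φ a).Nonempty) : ∃ p ∈ piercingSet c φ a, p ∈ sqSet m θ b := by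
  obtain ⟨z, ⟨hz₁, hz₂⟩, hz₃, hz₄⟩ := h
  obtain ⟨r, hr⟩ : ∃ r, r = a / 50 := ⟨_, rfl⟩
  have hr₀ : 0 < r := by rw [hr]; positivity
  have scale : ∀ f t : ℝ, |r * f| ≤ t ↔ |f| ≤ t / r := by
    intro f t
    rw [abs_mul, abs_of_pos hr₀, le_div_iff₀ hr₀, mul_comm]
  have hforms : ∀ x y : ℝ, framePoint c φ r x y ∈ sqSet m θ b ↔
      |Real.cos (θ - φ) * x + -Real.sin (θ - φ) * y - -(sqForm1 m θ c / r)| ≤ b / 2 / r ∧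
      |- -Real.sin (θ - φ) * x + Real.cos (θ - φ) * y - -(sqForm2 m θ c / r)| ≤ b / 2 / r := by
    intro x y
    rw [← scale, ← scale, sqSet, Set.mem_ofPred_eq, sqForm1_framePoint, sqForm2_framePoint]
    rw [mul_sub, mul_sub, mul_neg, mul_neg, mul_div_cancel₀ _ hr₀.ne', mul_div_cancel₀ _ hr₀.ne',
      sub_neg_eq_add, sub_neg_eq_add, neg_neg, add_comm, add_comm (sqForm2 m θ c)]
  have hside : a / 2 / r = 25 := by rw [hr]; field_simp; norm_num
  have hx : |sqForm1 c φ z / r| ≤ 25 := by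
    rw [← hside, ← scale, mul_div_cancel₀ _ hr₀.ne']
    exact hz₃
  have hy : |sqForm2 c φ z / r| ≤ 25 := by
    rw [← hside, ← scale, mul_div_cancel₀ _ hr₀.ne']
    exact hz₄
  have hz := (hforms (sqForm1 c φ z / r) (sqForm2 c φ z / r)).1
    (by rw [framePoint_sqForm c φ hr₀.ne' z]; exact ⟨hz₁, hz₂⟩)
  have hρ : 25 ≤ b / 2 / r := by rw [← hside]; gcongr
  obtain ⟨P, hP, hPm⟩ := pierced_of_mem_of_le
    (by rw [neg_sq]; exact Real.cos_sq_add_sin_sq _) hρ hx hy hz.1 hz.2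
  refine ⟨framePoint c φ r P.1 P.2, ?_, (hforms _ _).2 hPm⟩
  rw [hr]
  exact Finset.mem_image_of_mem (fun P : ℤ × ℤ => framePoint c φ (a / 50) P.1 P.2)
    (List.mem_toFinset.2 hP)

lemma sqSet_nonempty (c : Pt) (θ : ℝ) {a : ℝ} (ha : 0 < a) : (sqSet c θ a).Nonempty :=
  ⟨c, by simp [sqSet, sqForm1, sqForm2]; positivity⟩

/-! ### Greedy choice of smallest squares -/

lemma exists_hits_packing (C : Finset (Set Pt)) (h : ∀ S ∈ C, IsSquareSet S) :
    ∃ (H : Finset Pt) (P : Finset (Set Pt)), P ⊆ C ∧ (P : Set (Set Pt)).Pairwise Disjoint ∧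
      Hits H C ∧ H.card ≤ 10 * P.card := by
  choose! ctr ang side hside heq using h
  induction C using Finset.strongInduction with
  | H C ih =>
    rcases C.eq_empty_or_nonempty with rfl | hC
    · exact ⟨∅, ∅, by simp [Hits]⟩
    obtain ⟨Q, hQ, hmin⟩ := Finset.exists_min_image C side hC
    have hQne : Q.Nonempty := by
      rw [heq Q hQ]
      exact sqSet_nonempty _ _ (hside Q hQ)
    have hsub : C.filter (Disjoint Q) ⊂ C :=
      Finset.filter_ssubset.2 ⟨Q, hQ, fun hd => hQne.ne_empty (disjoint_self.1 hd)⟩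
    obtain ⟨H, P, hPC, hP, hH, hcard⟩ := ih _ hsub
      (fun S hS => hside S (hsub.1 hS)) (fun S hS => heq S (hsub.1 hS))
    have hQP : ∀ S ∈ P, Disjoint Q S := fun S hS => (Finset.mem_filter.1 (hPC hS)).2
    have hQnP : Q ∉ P := fun hQP' => hQne.ne_empty (disjoint_self.1 (hQP Q hQP'))
    refine ⟨piercingSet (ctr Q) (ang Q) (side Q) ∪ H, insert Q P, ?_, ?_, ?_, ?_⟩
    · exact Finset.insert_subset hQ (hPC.trans hsub.1)
    · rw [Finset.coe_insert]
      exact hP.insert fun S hS _ => ⟨hQP S hS, (hQP S hS).symm⟩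
    · intro S hS
      by_cases hd : Disjoint Q S
      · obtain ⟨p, hp, hpS⟩ := hH S (Finset.mem_filter.2 ⟨hS, hd⟩)
        exact ⟨p, Finset.mem_union_right _ hp, hpS⟩
      · have hmeet : (S ∩ Q).Nonempty := by
          rw [Set.inter_comm]
          exact Set.not_disjoint_iff_nonempty_inter.1 hd
        rw [heq S hS, heq Q hQ] at hmeet
        obtain ⟨p, hp, hpS⟩ := exists_mem_piercingSet (hside Q hQ) (hmin S hS) hmeet
        exact ⟨p, Finset.mem_union_left _ hp, by rw [heq S hS]; exact hpS⟩
    · rw [Finset.card_insert_of_notMem hQnP]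
      have := Finset.card_union_le (piercingSet (ctr Q) (ang Q) (side Q)) H
      have := card_piercingSet_le (ctr Q) (ang Q) (side Q)
      omega

lemma hitNum_le_card {H : Finset Pt} {F : Finset (Set Pt)} (h : Hits H F) : hitNum F ≤ H.card :=
  Nat.sInf_le ⟨H, rfl, h⟩

lemma card_le_packNum {P F : Finset (Set Pt)} (hPF : P ⊆ F)
    (hP : (P : Set (Set Pt)).Pairwise Disjoint) : P.card ≤ packNum F :=
  le_csSup ⟨F.card, by rintro n ⟨R, hR, rfl, -⟩; exact Finset.card_le_card hR⟩ ⟨P, hPF, rfl, hP⟩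

end SquarePiercing

open SquarePiercing in
theorem stmt_15 (C : Finset (Set Pt)) (h : ∀ S ∈ C, IsSquareSet S) :
    hitNum C ≤ 10 * packNum C := by
  obtain ⟨H, P, hPC, hP, hH, hcard⟩ := exists_hits_packing C h
  calc hitNum C ≤ H.card := hitNum_le_card hH
    _ ≤ 10 * P.card := hcard
    _ ≤ 10 * packNum C := Nat.mul_le_mul_left 10 (card_le_packNum hPC hP)
end
end

section
/- There exists a family of 9 pairwise intersecting unit squares in the plane (so ν = 1) that cannot be hit by fewer than 3 points, i.e., τ = 3. -/
open Classical MeasureTheory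
noncomputable section

/-- Integer data for a unit square: the centre is `(x, y) / 100`, and the first side direction
is `(a, b) / c`. -/
structure GridSquare where
  x : ℤ
  y : ℤ
  a : ℤ
  b : ℤ
  c : ℤ

namespace GridSquare

/-- The first side direction of a grid square comes from a Pythagorean triple. -/
def Valid (s : GridSquare) : Prop := 0 < s.c ∧ s.a ^ 2 + s.b ^ 2 = s.c ^ 2

/-- The region of the plane described by a grid square. -/
def toSet (s : GridSquare) : Set Pt :=
  {p | |(s.a : ℝ) * (100 * p 0 - s.x) + s.b * (100 * p 1 - s.y)| ≤ 50 * s.c ∧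
    |(s.b : ℝ) * (100 * p 0 - s.x) - s.a * (100 * p 1 - s.y)| ≤ 50 * s.c}

/-- The square contains the point `(u, v) / 100`. -/
def Contains (s : GridSquare) (w : ℤ × ℤ) : Prop :=
  |s.a * (w.1 - s.x) + s.b * (w.2 - s.y)| ≤ 50 * s.c ∧
    |s.b * (w.1 - s.x) - s.a * (w.2 - s.y)| ≤ 50 * s.c

instance (s : GridSquare) : Decidable s.Valid := inferInstanceAs (Decidable (_ ∧ _))

instance (s : GridSquare) (w : ℤ × ℤ) : Decidable (s.Contains w) :=
  inferInstanceAs (Decidable (_ ∧ _))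

/-- The four outer side normals, of length `c`. -/
def normal (s : GridSquare) : Fin 4 → ℤ × ℤ :=
  ![(s.a, s.b), (-s.b, s.a), (-s.a, -s.b), (s.b, -s.a)]

/-- The bound on the scalar product with the `k`-th normal, in units of `1 / 100`. -/
def bound (s : GridSquare) (k : Fin 4) : ℤ :=
  (s.normal k).1 * s.x + (s.normal k).2 * s.y + 50 * s.c

end GridSquare

/-- The point `(u, v) / 100` of the plane. -/
def gridPoint (w : ℤ × ℤ) : Pt := !₂[(w.1 : ℝ) / 100, (w.2 : ℝ) / 100]

/-- The cross product of two integer vectors. -/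
def cross (u v : ℤ × ℤ) : ℤ := u.1 * v.2 - u.2 * v.1

/-- The half-planes bounding side `k i` of `s i`, for `i = 0, 1, 2`, have empty intersection,
by a nonnegative combination of their inequalities whose left-hand side vanishes. -/
def SidesSeparate (s : Fin 3 → GridSquare) (k : Fin 3 → Fin 4) : Prop :=
  let n := fun i => (s i).normal (k i)
  0 ≤ cross (n 1) (n 2) ∧ 0 ≤ cross (n 2) (n 0) ∧ 0 ≤ cross (n 0) (n 1) ∧
    cross (n 1) (n 2) * (s 0).bound (k 0) + cross (n 2) (n 0) * (s 1).bound (k 1) +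
      cross (n 0) (n 1) * (s 2).bound (k 2) < 0

instance (s : Fin 3 → GridSquare) (k : Fin 3 → Fin 4) : Decidable (SidesSeparate s k) :=
  inferInstanceAs (Decidable (_ ∧ _ ∧ _ ∧ _))

theorem exists_cos_sin_eq_div {a b c : ℝ} (hc : 0 < c) (h : a ^ 2 + b ^ 2 = c ^ 2) :
    ∃ θ, Real.cos θ = a / c ∧ Real.sin θ = b / c := by
  have hz : ‖(⟨a, b⟩ : ℂ)‖ = c := by
    rw [Complex.norm_def, Complex.normSq_mk, ← sq, ← sq, h, Real.sqrt_sq hc.le]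
  have hne : (⟨a, b⟩ : ℂ) ≠ 0 := by
    rw [← norm_pos_iff, hz]
    exact hc
  exact ⟨Complex.arg ⟨a, b⟩, by rw [Complex.cos_arg hne, hz], by rw [Complex.sin_arg, hz]⟩

theorem GridSquare.Valid.isUnitSquare {s : GridSquare} (hs : s.Valid) :
    IsUnitSquare s.toSet := by
  have hc : (0 : ℝ) < s.c := by exact_mod_cast hs.1
  obtain ⟨θ, hcos, hsin⟩ := exists_cos_sin_eq_div (a := s.a) (b := s.b) hc
    (by exact_mod_cast hs.2)
  refine ⟨gridPoint (s.x, s.y), θ, ?_⟩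
  have key (t : ℝ) : |t| ≤ 50 * s.c ↔ |t / (100 * s.c)| ≤ 1 / 2 := by
    rw [abs_div, abs_of_pos (by positivity : (0 : ℝ) < 100 * s.c), div_le_iff₀ (by positivity)]
    ring_nf
  ext p
  simp only [GridSquare.toSet, sqSet, sqForm1, sqForm2, Set.mem_ofPred_eq, hcos, hsin, key]
  congr! 3
  all_goals
    simp [gridPoint]
    field_simp

theorem GridSquare.gridPoint_mem_toSet {s : GridSquare} {w : ℤ × ℤ} :
    gridPoint w ∈ s.toSet ↔ s.Contains w := by
  simp only [toSet, Contains, gridPoint, Set.mem_ofPred_eq, Matrix.cons_val_zero,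
    Matrix.cons_val_one, mul_div_cancel₀ _ (by norm_num : (100 : ℝ) ≠ 0)]
  norm_cast

theorem GridSquare.normal_le_bound {s : GridSquare} {p : Pt} (hp : p ∈ s.toSet) (k : Fin 4) :
    ((s.normal k).1 : ℝ) * (100 * p 0) + (s.normal k).2 * (100 * p 1) ≤ s.bound k := by
  obtain ⟨h₁, h₂⟩ := hp
  rw [abs_le] at h₁ h₂
  fin_cases k <;> simp [normal, bound] <;> linarith

theorem SidesSeparate.exists_notMem {s : Fin 3 → GridSquare} {k : Fin 3 → Fin 4}
    (h : SidesSeparate s k) (p : Pt) : ∃ i, p ∉ (s i).toSet := by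
  by_contra! hp
  obtain ⟨h₀, h₁, h₂, hlt⟩ := h
  have key (i : Fin 3) {l : ℤ} (hl : 0 ≤ l) :=
    mul_le_mul_of_nonneg_left (GridSquare.normal_le_bound (hp i) (k i))
      (Int.cast_nonneg (R := ℝ) hl)
  have k₀ := key 0 h₀
  have k₁ := key 1 h₁
  have k₂ := key 2 h₂
  have hlt' := (Int.cast_lt (R := ℝ)).2 hlt
  simp only [cross] at k₀ k₁ k₂ hlt'
  push_cast at k₀ k₁ k₂ hlt'
  linarith

/-- Nine pairwise intersecting unit squares with hitting number three. -/
def nineSquares : Fin 9 → GridSquare :=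
  ![⟨-48, 6, 8, 15, 17⟩, ⟨19, -44, 1, 0, 1⟩, ⟨29, 38, 45, 28, 53⟩,
    ⟨-19, -44, 1, 0, 1⟩, ⟨48, 5, 15, 8, 17⟩, ⟨-29, 39, 8, 15, 17⟩,
    ⟨-64, 40, 28, 45, 53⟩, ⟨-2, -75, 1, 0, 1⟩, ⟨67, 36, 15, 8, 17⟩]

/-- Points that witness the pairwise intersections; the first three hit every square. -/
def witnessPoints : Fin 9 → ℤ × ℤ :=
  ![(-52, -26), (-31, -1), (15, 28), (10, -26), (-19, 25),
    (27, 5), (-15, -25), (0, 56), (43, -25)]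

/-- Triples of members of `nineSquares` without a common point, each listed together with the
sides that show it. -/
def disjointTriples : Fin 10 → Fin 3 → Fin 9 × Fin 4 :=
  ![![(0, 3), (7, 1), (4, 2)], ![(0, 0), (8, 2), (6, 3)],
    ![(1, 1), (8, 2), (5, 3)], ![(1, 2), (6, 3), (7, 1)],
    ![(2, 2), (6, 3), (3, 1)], ![(2, 3), (7, 1), (8, 2)],
    ![(3, 0), (7, 1), (8, 2)], ![(4, 1), (8, 2), (6, 3)],
    ![(5, 2), (6, 3), (7, 1)], ![(6, 3), (7, 1), (8, 2)]]

theorem sidesSeparate_disjointTriples (t : Fin 10) :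
    SidesSeparate (fun i => nineSquares (disjointTriples t i).1)
      (fun i => (disjointTriples t i).2) := by
  revert t
  decide

set_option maxRecDepth 100000 in
theorem exists_monochromatic_disjointTriple (col : Fin 9 → Bool) :
    ∃ t b, ∀ i, col (disjointTriples t i).1 = b := by
  revert col
  decide

theorem card_ge_three_of_hits_nineSquares (H : Finset Pt)
    (hH : ∀ i, ∃ p ∈ H, p ∈ (nineSquares i).toSet) : 3 ≤ H.card := by
  by_contra! hcard
  obtain ⟨H', hsub, hcard'⟩ := Infinite.exists_superset_card_eq H 2 (by omega)
  obtain ⟨p, q, -, rfl⟩ := Finset.card_eq_two.1 hcard'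
  have hpq (i : Fin 9) : p ∈ (nineSquares i).toSet ∨ q ∈ (nineSquares i).toSet := by
    obtain ⟨r, hr, hri⟩ := hH i
    rcases Finset.mem_insert.1 (hsub hr) with rfl | hr
    · exact .inl hri
    · exact .inr (Finset.mem_singleton.1 hr ▸ hri)
  obtain ⟨t, b, hb⟩ :=
    exists_monochromatic_disjointTriple fun i => decide (p ∈ (nineSquares i).toSet)
  cases b
  · obtain ⟨i, hi⟩ := (sidesSeparate_disjointTriples t).exists_notMem q
    exact hi ((hpq _).resolve_left (of_decide_eq_false (hb i)))
  · obtain ⟨i, hi⟩ := (sidesSeparate_disjointTriples t).exists_notMem p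
    exact hi (of_decide_eq_true (hb i))

theorem gridPoint_injective : Function.Injective gridPoint := by
  intro u v h
  have h₀ := congrArg (fun p : Pt => p 0) h
  have h₁ := congrArg (fun p : Pt => p 1) h
  simp [gridPoint] at h₀ h₁
  exact Prod.ext (by exact_mod_cast h₀) (by exact_mod_cast h₁)

theorem injective_nineSquares_toSet : Function.Injective fun i => (nineSquares i).toSet := by
  intro i j h
  have hw (k : Fin 9) : (nineSquares i).Contains (witnessPoints k) ↔
      (nineSquares j).Contains (witnessPoints k) := by
    rw [← GridSquare.gridPoint_mem_toSet, ← GridSquare.gridPoint_mem_toSet]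
    exact Set.ext_iff.1 h _
  clear h
  revert i j
  decide

theorem stmt_16 : ∃ f : Fin 9 → Set Pt, Function.Injective f ∧
    (∀ i, IsUnitSquare (f i)) ∧
    (∀ i j, (f i ∩ f j).Nonempty) ∧
    (∀ H : Finset Pt, (∀ i, ∃ p ∈ H, p ∈ f i) → 3 ≤ H.card) ∧
    (∃ H : Finset Pt, H.card = 3 ∧ ∀ i, ∃ p ∈ H, p ∈ f i) := by
  refine ⟨fun i => (nineSquares i).toSet, injective_nineSquares_toSet, fun i => ?_, fun i j => ?_,
    card_ge_three_of_hits_nineSquares,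
    (Finset.image (fun k : Fin 3 => witnessPoints (k.castLE (by norm_num))) Finset.univ).image
      gridPoint, ?_, fun i => ?_⟩
  · have hvalid : ∀ i, (nineSquares i).Valid := by decide
    exact (hvalid i).isUnitSquare
  · have hmeet : ∀ i j, ∃ k, (nineSquares i).Contains (witnessPoints k) ∧
        (nineSquares j).Contains (witnessPoints k) := by decide
    obtain ⟨k, hi, hj⟩ := hmeet i j
    exact ⟨gridPoint (witnessPoints k), GridSquare.gridPoint_mem_toSet.2 hi,
      GridSquare.gridPoint_mem_toSet.2 hj⟩
  · rw [Finset.card_image_of_injective _ gridPoint_injective, Finset.card_image_of_injective]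
    · simp
    · unfold Function.Injective
      decide
  · have hhit : ∀ i, ∃ k : Fin 3,
        (nineSquares i).Contains (witnessPoints (k.castLE (by norm_num))) := by decide
    obtain ⟨k, hk⟩ := hhit i
    exact ⟨_, Finset.mem_image_of_mem _ (Finset.mem_image_of_mem _ (Finset.mem_univ k)),
      GridSquare.gridPoint_mem_toSet.2 hk⟩
end
end

section
/- There exists a family of 13 pairwise intersecting squares (of varying sizes, possibly rotated) in the plane such that no set of 3 points hits all of them; hence τ/ν = 4 for this family. -/
open Classical MeasureTheory
noncomputable section

/-- A square given by integer data: centre `(a, b)`, half side `h`, and the direction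
`(c / r, s / r)` of one of its axes. -/
structure IntSquare where
  c : ℤ
  s : ℤ
  r : ℤ
  a : ℤ
  b : ℤ
  h : ℤ

/-- The region of the plane covered by an `IntSquare`. -/
def IntSquare.region (q : IntSquare) : Set Pt :=
  {p | |(q.c : ℝ) * (p 0 - q.a) + q.s * (p 1 - q.b)| ≤ q.r * q.h ∧
    |(q.s : ℝ) * (p 0 - q.a) - q.c * (p 1 - q.b)| ≤ q.r * q.h}

/-- Membership of an integer point in the region of an `IntSquare`, as a Boolean test. -/
def IntSquare.contains (q : IntSquare) (x : ℤ × ℤ) : Bool :=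
  decide ((q.c * (x.1 - q.a) + q.s * (x.2 - q.b)).natAbs ≤ (q.r * q.h).toNat) &&
    decide ((q.s * (x.1 - q.a) - q.c * (x.2 - q.b)).natAbs ≤ (q.r * q.h).toNat)

/-- The point of the plane with the given integer coordinates. -/
def intPt (x : ℤ × ℤ) : Pt := !₂[(x.1 : ℝ), (x.2 : ℝ)]

lemma intPt_injective : Function.Injective intPt := by
  intro x y h
  have h0 := congrArg (fun p : Pt => p 0) h
  have h1 := congrArg (fun p : Pt => p 1) h
  simp only [intPt, PiLp.toLp_apply, Matrix.cons_val_zero, Matrix.cons_val_one,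
    Int.cast_inj] at h0 h1
  exact Prod.ext h0 h1

lemma abs_cast_le_iff_natAbs_le {x m : ℤ} (hm : 0 ≤ m) :
    |(x : ℝ)| ≤ m ↔ x.natAbs ≤ m.toNat := by
  rw [← Int.cast_abs, Int.cast_le, Int.abs_eq_natAbs]
  omega

lemma IntSquare.intPt_mem_region_iff {q : IntSquare} (hq : 0 ≤ q.r * q.h) (x : ℤ × ℤ) :
    intPt x ∈ q.region ↔ q.contains x = true := by
  simp only [IntSquare.region, IntSquare.contains, intPt, Set.mem_ofPred_eq,
    Matrix.cons_val_zero, Matrix.cons_val_one, Bool.and_eq_true, decide_eq_true_eq,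
    ← abs_cast_le_iff_natAbs_le hq]
  push_cast
  rfl

lemma exists_cos_eq_sin_eq {x y : ℝ} (h : x ^ 2 + y ^ 2 = 1) :
    ∃ θ : ℝ, Real.cos θ = x ∧ Real.sin θ = y := by
  have hn : ‖(⟨x, y⟩ : ℂ)‖ = 1 := by
    rw [Complex.norm_def, Complex.normSq_mk, ← sq, ← sq, h, Real.sqrt_one]
  have h0 : (⟨x, y⟩ : ℂ) ≠ 0 := norm_ne_zero_iff.mp (by rw [hn]; exact one_ne_zero)
  exact ⟨Complex.arg ⟨x, y⟩, by rw [Complex.cos_arg h0, hn, div_one],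
    by rw [Complex.sin_arg, hn, div_one]⟩

lemma IntSquare.isSquareSet_region {q : IntSquare} (hcs : q.c ^ 2 + q.s ^ 2 = q.r ^ 2)
    (hr : 0 < q.r) (hh : 0 < q.h) : IsSquareSet q.region := by
  have hr' : (0 : ℝ) < q.r := by exact_mod_cast hr
  have hcs' : (q.c : ℝ) ^ 2 + (q.s : ℝ) ^ 2 = (q.r : ℝ) ^ 2 := by exact_mod_cast hcs
  obtain ⟨θ, hc, hs⟩ := exists_cos_eq_sin_eq (x := q.c / q.r) (y := q.s / q.r) (by
    rw [div_pow, div_pow, ← add_div, hcs', div_self (pow_ne_zero 2 hr'.ne')])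
  refine ⟨intPt (q.a, q.b), θ, 2 * q.h, by exact_mod_cast (by omega : 0 < 2 * q.h), ?_⟩
  have key : ∀ u : ℝ, |u / q.r| ≤ 2 * q.h / 2 ↔ |u| ≤ q.r * q.h := fun u => by
    rw [abs_div, abs_of_pos hr', div_le_iff₀ hr', mul_div_cancel_left₀ _ two_ne_zero, mul_comm]
  ext p
  simp only [IntSquare.region, sqSet, sqForm1, sqForm2, intPt, hc, hs, Set.mem_ofPred_eq,
    PiLp.toLp_apply, Matrix.cons_val_zero, Matrix.cons_val_one, div_mul_eq_mul_div, ← add_div,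
    ← sub_div, key]

/-- The half-plane `u * x + v * y ≤ w` with integer coefficients. -/
structure IntHalfPlane where
  u : ℤ
  v : ℤ
  w : ℤ

/-- The region of the plane covered by an `IntHalfPlane`. -/
def IntHalfPlane.region (P : IntHalfPlane) : Set Pt :=
  {p | (P.u : ℝ) * p 0 + P.v * p 1 ≤ P.w}

/-- The outer normals of the three half-planes are in counterclockwise order and positively
span the plane, and the three boundary lines bound a triangle outside the half-planes. -/
def IntHalfPlane.closesUp (P Q R : IntHalfPlane) : Bool :=
  decide (0 ≤ Q.u * R.v - Q.v * R.u) && decide (0 ≤ R.u * P.v - R.v * P.u) &&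
    decide (0 ≤ P.u * Q.v - P.v * Q.u) &&
    decide ((Q.u * R.v - Q.v * R.u) * P.w + (R.u * P.v - R.v * P.u) * Q.w +
      (P.u * Q.v - P.v * Q.u) * R.w < 0)

lemma IntHalfPlane.not_mem_of_closesUp {P Q R : IntHalfPlane} (h : P.closesUp Q R = true)
    {p : Pt} : ¬ (p ∈ P.region ∧ p ∈ Q.region ∧ p ∈ R.region) := by
  rintro ⟨hP, hQ, hR⟩
  simp only [IntHalfPlane.region, Set.mem_ofPred_eq] at hP hQ hR
  simp only [IntHalfPlane.closesUp, Bool.and_eq_true, decide_eq_true_eq] at h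
  obtain ⟨⟨⟨h₁, h₂⟩, h₃⟩, h₄⟩ := h
  have h₁' := mul_le_mul_of_nonneg_left hP (Int.cast_nonneg (R := ℝ) h₁)
  have h₂' := mul_le_mul_of_nonneg_left hQ (Int.cast_nonneg (R := ℝ) h₂)
  have h₃' := mul_le_mul_of_nonneg_left hR (Int.cast_nonneg (R := ℝ) h₃)
  have h₄' := (Int.cast_lt (R := ℝ)).2 h₄
  push_cast at h₁' h₂' h₃' h₄'
  linarith

/-- The four half-planes bounded by the sides of an `IntSquare`. -/
def IntSquare.side (q : IntSquare) : Fin 4 → IntHalfPlane :=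
  ![⟨q.c, q.s, q.r * q.h + (q.c * q.a + q.s * q.b)⟩,
    ⟨-q.c, -q.s, q.r * q.h - (q.c * q.a + q.s * q.b)⟩,
    ⟨q.s, -q.c, q.r * q.h + (q.s * q.a - q.c * q.b)⟩,
    ⟨-q.s, q.c, q.r * q.h - (q.s * q.a - q.c * q.b)⟩]

lemma IntSquare.region_subset_side (q : IntSquare) (k : Fin 4) :
    q.region ⊆ (q.side k).region := by
  rintro p ⟨h₁, h₂⟩
  rw [abs_le] at h₁ h₂
  fin_cases k <;> simp [IntSquare.side, IntHalfPlane.region] <;> linarith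

/-- Nine pairwise intersecting squares that cannot be hit by three points. -/
def coreSquares : Fin 9 → IntSquare :=
  ![⟨12, 5, 13, 152, -448, 384⟩, ⟨1, 0, 1, 0, 32, 104⟩, ⟨28, 45, 53, -472, 48, 272⟩,
    ⟨15, 8, 17, -352, -16, 200⟩, ⟨12, 5, 13, -16, 8, 112⟩, ⟨7, 24, 25, -344, 56, 208⟩,
    ⟨5, 12, 13, -16, 48, 112⟩, ⟨35, 12, 37, 160, -448, 376⟩, ⟨12, 35, 37, 160, 504, 376⟩]

/-- Four large squares, meeting every core square. -/
def largeSquares : Fin 4 → IntSquare :=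
  ![⟨1, 0, 1, 0, 0, 400⟩, ⟨1, 0, 1, 0, 0, 401⟩, ⟨1, 0, 1, 0, 0, 402⟩, ⟨1, 0, 1, 0, 0, 403⟩]

/-- The core squares followed by the large ones. -/
def squares : Fin 13 → IntSquare := Fin.append coreSquares largeSquares

/-- Every two of the squares share one of these points. -/
def commonPoints : List (ℤ × ℤ) :=
  [(98, -72), (-347, -240), (0, -106), (-196, -177), (34, -94), (-104, 136), (-98, 135),
    (-96, -71), (-315, -214), (-132, 80), (-118, -30), (-141, 10), (340, 45), (74, 136),
    (-311, 268), (-270, 254), (34, 150), (-87, 195), (0, 162), (389, 28)]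

/-- Every two distinct squares are told apart by one of these points. -/
def separatingPoints : List (ℤ × ℤ) :=
  commonPoints ++ [(401, 0), (402, 0), (403, 0)]

/-- Triples of core squares without a common point, each in the order in which
`IntHalfPlane.closesUp` certifies this. -/
def emptyTriples : List (Fin 9 × Fin 9 × Fin 9) :=
  [(0, 1, 3), (0, 1, 6), (0, 4, 2), (0, 5, 2), (0, 7, 2), (0, 6, 3), (0, 6, 5), (1, 2, 3),
    (1, 6, 3), (1, 5, 4), (1, 4, 7), (1, 5, 7), (2, 4, 6), (2, 5, 6), (2, 7, 6), (3, 4, 5),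
    (3, 7, 4), (3, 7, 5), (4, 5, 7), (4, 7, 6), (0, 8, 1), (0, 8, 2), (0, 8, 3), (0, 8, 4),
    (0, 8, 5), (0, 8, 6), (0, 7, 8), (1, 8, 2), (1, 8, 3), (1, 8, 4), (1, 8, 5), (1, 8, 6),
    (1, 7, 8), (2, 3, 8), (2, 4, 8), (2, 5, 8), (2, 6, 8), (2, 7, 8), (3, 4, 8), (3, 5, 8),
    (3, 6, 8), (3, 7, 8), (4, 8, 5), (4, 8, 6), (4, 7, 8), (5, 6, 8), (5, 7, 8), (6, 7, 8)]

lemma squares_pythagorean (i : Fin 13) :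
    (squares i).c ^ 2 + (squares i).s ^ 2 = (squares i).r ^ 2 ∧
      0 < (squares i).r ∧ 0 < (squares i).h := by
  revert i
  decide

lemma intPt_mem_squares_iff (i : Fin 13) (x : ℤ × ℤ) :
    intPt x ∈ (squares i).region ↔ (squares i).contains x = true :=
  have h := squares_pythagorean i
  IntSquare.intPt_mem_region_iff (mul_pos h.2.1 h.2.2).le x

lemma squares_region_injective : Function.Injective fun i => (squares i).region := by
  have hsep : ∀ i j, i ≠ j →
      ∃ x ∈ separatingPoints, (squares i).contains x ≠ (squares j).contains x := by decide +kernel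
  intro i j hij
  by_contra hne
  obtain ⟨x, -, hx⟩ := hsep i j hne
  apply hx
  rw [Bool.eq_iff_iff, ← intPt_mem_squares_iff, ← intPt_mem_squares_iff]
  exact iff_of_eq (congrArg (intPt x ∈ ·) hij)

lemma squares_region_inter_nonempty (i j : Fin 13) :
    ((squares i).region ∩ (squares j).region).Nonempty := by
  have hcommon : ∀ i j, ∃ x ∈ commonPoints,
      (squares i).contains x = true ∧ (squares j).contains x = true := by decide +kernel
  obtain ⟨x, -, hi, hj⟩ := hcommon i j
  exact ⟨intPt x, (intPt_mem_squares_iff i x).2 hi, (intPt_mem_squares_iff j x).2 hj⟩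

lemma not_mem_region_of_mem_emptyTriples (p : Pt) {t : Fin 9 × Fin 9 × Fin 9}
    (ht : t ∈ emptyTriples) :
    ¬ (p ∈ (coreSquares t.1).region ∧ p ∈ (coreSquares t.2.1).region ∧
      p ∈ (coreSquares t.2.2).region) := by
  have hempty : ∀ t ∈ emptyTriples, ∃ k₁ k₂ k₃,
      ((coreSquares t.1).side k₁).closesUp ((coreSquares t.2.1).side k₂)
        ((coreSquares t.2.2).side k₃) = true := by decide +kernel
  obtain ⟨k₁, k₂, k₃, hk⟩ := hempty t ht
  rintro ⟨h₁, h₂, h₃⟩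
  exact IntHalfPlane.not_mem_of_closesUp hk ⟨IntSquare.region_subset_side _ k₁ h₁,
    IntSquare.region_subset_side _ k₂ h₂, IntSquare.region_subset_side _ k₃ h₃⟩

/-- Weights of the core squares; no point lies in core squares of total weight above `3`. -/
def weight : Fin 9 → ℕ := ![1, 1, 1, 1, 1, 1, 1, 1, 2]

lemma sum_weight_le_of_emptyTriples : ∀ S : Finset (Fin 9),
    (∀ t ∈ emptyTriples, ¬ (t.1 ∈ S ∧ t.2.1 ∈ S ∧ t.2.2 ∈ S)) → ∑ i ∈ S, weight i ≤ 3 := by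
  decide +kernel

lemma sum_weight_mem_le (p : Pt) :
    ∑ i, (if p ∈ (coreSquares i).region then weight i else 0) ≤ 3 := by
  rw [← Finset.sum_filter]
  refine sum_weight_le_of_emptyTriples _ fun t ht => ?_
  simpa only [Finset.mem_filter_univ] using not_mem_region_of_mem_emptyTriples p ht

lemma four_le_card_of_hits {H : Finset Pt}
    (hH : ∀ i, ∃ p ∈ H, p ∈ (coreSquares i).region) : 4 ≤ H.card := by
  have hle : ∑ i, weight i ≤ H.card * 3 := by
    calc ∑ i, weight i
        ≤ ∑ i, ∑ p ∈ H, (if p ∈ (coreSquares i).region then weight i else 0) := by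
          refine Finset.sum_le_sum fun i _ => ?_
          obtain ⟨p, hp, hpi⟩ := hH i
          refine le_trans ?_ (Finset.single_le_sum (fun _ _ => Nat.zero_le _) hp)
          rw [if_pos hpi]
      _ = ∑ p ∈ H, ∑ i, (if p ∈ (coreSquares i).region then weight i else 0) := Finset.sum_comm
      _ ≤ H.card * 3 := Finset.sum_le_card_nsmul _ _ _ fun p _ => sum_weight_mem_le p
  have htot : ∑ i, weight i = 10 := by decide
  omega

theorem stmt_17 : ∃ f : Fin 13 → Set Pt, Function.Injective f ∧
    (∀ i, IsSquareSet (f i)) ∧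
    (∀ i j, (f i ∩ f j).Nonempty) ∧
    (∀ H : Finset Pt, (∀ i, ∃ p ∈ H, p ∈ f i) → 4 ≤ H.card) ∧
    (∃ H : Finset Pt, H.card = 4 ∧ ∀ i, ∃ p ∈ H, p ∈ f i) := by
  refine ⟨fun i => (squares i).region, squares_region_injective, fun i => ?_,
    squares_region_inter_nonempty, fun H hH => four_le_card_of_hits fun i => ?_,
    ({(98, -72), (-347, -240), (-132, 80), (0, 162)} : Finset (ℤ × ℤ)).image intPt, ?_,
    fun i => ?_⟩
  · obtain ⟨hcs, hr, hh⟩ := squares_pythagorean i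
    exact IntSquare.isSquareSet_region hcs hr hh
  · simpa only [squares, Fin.append_left] using hH (Fin.castAdd 4 i)
  · rw [Finset.card_image_of_injective _ intPt_injective]
    rfl
  · have hhit : ∀ i, ∃ x ∈ ({(98, -72), (-347, -240), (-132, 80), (0, 162)} : Finset (ℤ × ℤ)),
        (squares i).contains x = true := by decide +kernel
    obtain ⟨x, hx, hi⟩ := hhit i
    exact ⟨intPt x, Finset.mem_image_of_mem _ hx, (intPt_mem_squares_iff i x).2 hi⟩
end
end
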